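/- Let K have characteristic 0, I = I_{a,b,c,α,β,γ} = (x₁^a, x₂^b, x₃^c, x₁^α x₂^β x₃^γ) ⊂ K[x₁,x₂,x₃] a monomial almost complete intersection (α < a, β < b, γ < c, at least two of α,β,γ nonzero), and suppose A = S/I fails the weak Lefschetz property. Then 3 divides a+b+c+α+β+γ; setting s = (a+b+c+α+β+γ)/3 − 2, one has dim_K A_s = dim_K A_{s+1} = max_k dim_K A_k, and the multiplication ×y : A_s → A_{s+1} is not injective for any linear form y. -/

import Mathlib

open MvPolynomial

/-- The minimal number of generators of an ideal. -/
noncomputable def mu {R : Type*} [CommRing R] (I : Ideal R) : ℕ :=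
  sInf {k | ∃ s : Finset R, s.card = k ∧ Ideal.span (s : Set R) = I}

/-- The graded maximal ideal `(x₁, …, xₙ)` of `K[x₁, …, xₙ]`. -/
noncomputable def mm (K : Type*) [Field K] (n : ℕ) : Ideal (MvPolynomial (Fin n) K) :=
  Ideal.span (Set.range X)

/-- `I` is `m`-full: `mI : y = I` for some `y ∈ m`. -/
def IsMFull {R : Type*} [CommRing R] (m I : Ideal R) : Prop :=
  ∃ y ∈ m, (m * I).colon (Ideal.span {y}) = I

/-- A homogeneous ideal: one containing all homogeneous components of its elements. -/
def IsHomog {K : Type*} [Field K] {n : ℕ} (I : Ideal (MvPolynomial (Fin n) K)) : Prop :=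
  ∀ f ∈ I, ∀ k : ℕ, homogeneousComponent k f ∈ I

/-- `dim_K (S/I)_k`, the dimension of the degree `k` part of `S/I`. -/
noncomputable def hdim (K : Type*) [Field K] (n : ℕ)
    (I : Ideal (MvPolynomial (Fin n) K)) (k : ℕ) : ℕ :=
  Module.finrank K (Submodule.map (Ideal.Quotient.mkₐ K I).toLinearMap
    (homogeneousSubmodule (Fin n) K k))

/-- The weak Lefschetz property of `S/I`: there is a linear form `y` such that
multiplication `×y : (S/I)_k → (S/I)_{k+1}` is injective or surjective for
every `k`. -/
def WLP {K : Type*} [Field K] {n : ℕ} (I : Ideal (MvPolynomial (Fin n) K)) : Prop :=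
  ∃ y : MvPolynomial (Fin n) K, y.IsHomogeneous 1 ∧ ∀ k : ℕ,
    (∀ f : MvPolynomial (Fin n) K, f.IsHomogeneous k → y * f ∈ I → f ∈ I) ∨
    (∀ g : MvPolynomial (Fin n) K, g.IsHomogeneous (k + 1) →
      ∃ f : MvPolynomial (Fin n) K, f.IsHomogeneous k ∧ g - y * f ∈ I)


section Core
variable {K : Type*} [Field K]

/-- Univariate model of the degree `k` part of the ideal of the monomial with exponents `(p,q,r)`. -/
noncomputable def Wc (K : Type*) [Field K] (k p q r : ℕ) : Submodule K (Polynomial K) where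
  carrier := {h | Polynomial.X ^ p ∣ h ∧ (Polynomial.X + 1) ^ r ∣ h ∧
    h ∈ Polynomial.degreeLT K (k + 1 - q)}
  add_mem' := fun h1 h2 => ⟨dvd_add h1.1 h2.1, dvd_add h1.2.1 h2.2.1,
    Submodule.add_mem _ h1.2.2 h2.2.2⟩
  zero_mem' := ⟨dvd_zero _, dvd_zero _, Submodule.zero_mem _⟩
  smul_mem' := fun c h h1 => ⟨by rw [Polynomial.smul_eq_C_mul]; exact dvd_mul_of_dvd_right h1.1 _,
    by rw [Polynomial.smul_eq_C_mul]; exact dvd_mul_of_dvd_right h1.2.1 _,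
    Submodule.smul_mem _ _ h1.2.2⟩

theorem mem_Wc {k p q r : ℕ} {h : Polynomial K} : h ∈ Wc K k p q r ↔
    Polynomial.X ^ p ∣ h ∧ (Polynomial.X + 1) ^ r ∣ h ∧
    h ∈ Polynomial.degreeLT K (k + 1 - q) := Iff.rfl

theorem mem_dLT_iff {n : ℕ} {h : Polynomial K} :
    h ∈ Polynomial.degreeLT K n ↔ (h ≠ 0 → h.natDegree < n) := by
  rw [Polynomial.mem_degreeLT]
  by_cases h0 : h = 0
  · subst h0; simp
  · rw [Polynomial.degree_eq_natDegree h0]; simp [h0]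

theorem mem_Wc' {k p q r : ℕ} {h : Polynomial K} (h0 : h ≠ 0) : h ∈ Wc K k p q r ↔
    Polynomial.X ^ p ∣ h ∧ (Polynomial.X + 1) ^ r ∣ h ∧ h.natDegree + q ≤ k := by
  rw [mem_Wc, mem_dLT_iff]
  constructor
  · rintro ⟨h1, h2, h3⟩; exact ⟨h1, h2, by have := h3 h0; omega⟩
  · rintro ⟨h1, h2, h3⟩; exact ⟨h1, h2, fun _ => by omega⟩

theorem Wc_mono {k k' p q r : ℕ} (hk : k ≤ k') : Wc K k p q r ≤ Wc K k' p q r := by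
  intro h hh
  by_cases h0 : h = 0
  · subst h0; exact Submodule.zero_mem _
  rw [mem_Wc' h0] at hh ⊢
  exact ⟨hh.1, hh.2.1, by omega⟩

theorem Wc_theta {k p q r : ℕ} {h : Polynomial K} (hh : h ∈ Wc K k p q r) :
    Polynomial.X * (Polynomial.X + 1) * Polynomial.derivative h ∈ Wc K (k+1) p q r := by
  by_cases h0 : Polynomial.derivative h = 0
  · rw [h0, mul_zero]; exact Submodule.zero_mem _
  have hne : h ≠ 0 := by rintro rfl; simp at h0
  have hX1 : (Polynomial.X + 1 : Polynomial K) ≠ 0 := Polynomial.X_add_C_ne_zero 1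
  rw [mem_Wc' hne] at hh
  obtain ⟨h1, h2, h3⟩ := hh
  rw [mem_Wc' (mul_ne_zero (mul_ne_zero Polynomial.X_ne_zero hX1) h0)]
  refine ⟨?_, ?_, ?_⟩
  · have := Polynomial.pow_sub_one_dvd_derivative_of_pow_dvd h1
    rcases Nat.eq_zero_or_pos p with rfl | hp
    · simp
    · obtain ⟨u, hu⟩ := this
      refine ⟨(Polynomial.X + 1) * u, ?_⟩
      rw [hu]
      conv_rhs => rw [← Nat.sub_add_cancel hp, pow_succ]
      ring
  · have := Polynomial.pow_sub_one_dvd_derivative_of_pow_dvd h2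
    rcases Nat.eq_zero_or_pos r with rfl | hp
    · simp
    · obtain ⟨u, hu⟩ := this
      refine ⟨Polynomial.X * u, ?_⟩
      rw [hu]
      conv_rhs => rw [← Nat.sub_add_cancel hp, pow_succ]
      ring
  · rw [Polynomial.natDegree_mul (mul_ne_zero Polynomial.X_ne_zero hX1) h0,
      Polynomial.natDegree_mul Polynomial.X_ne_zero hX1, Polynomial.natDegree_X,
      show (Polynomial.X + 1 : Polynomial K) = Polynomial.X + Polynomial.C 1 by simp,
      Polynomial.natDegree_X_add_C]
    have hd : h.natDegree ≠ 0 := by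
      intro hd
      rw [Polynomial.natDegree_eq_zero] at hd
      obtain ⟨x, rfl⟩ := hd
      simp at h0
    have := Polynomial.natDegree_derivative_lt hd
    omega

theorem Wc_div {k p q r : ℕ} {h : Polynomial K} {u : K} (hu : u ≠ 0) (hu1 : u ≠ -1)
    (hh : (Polynomial.X - Polynomial.C u) * h ∈ Wc K (k+1) p q r) : h ∈ Wc K k p q r := by
  by_cases h0 : h = 0
  · subst h0; exact Submodule.zero_mem _
  have hXu := Polynomial.X_sub_C_ne_zero u
  rw [mem_Wc' (mul_ne_zero hXu h0), Polynomial.natDegree_mul hXu h0,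
    Polynomial.natDegree_X_sub_C] at hh
  rw [mem_Wc' h0]
  refine ⟨?_, ?_, by omega⟩
  · refine IsCoprime.dvd_of_dvd_mul_left (IsCoprime.pow_left ?_) hh.1
    have := Polynomial.isCoprime_X_sub_C_of_isUnit_sub (R := K) (a := 0) (b := u)
      (by simpa using hu)
    simpa using this
  · refine IsCoprime.dvd_of_dvd_mul_left (IsCoprime.pow_left ?_) hh.2.1
    have := Polynomial.isCoprime_X_sub_C_of_isUnit_sub (R := K) (a := -1) (b := u)
      (by rw [isUnit_iff_ne_zero]; intro h; apply hu1; linear_combination -h)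
    simpa using this

theorem Wc_le {k p q r : ℕ} : Wc K k p q r ≤ Polynomial.degreeLT K (k+1) := by
  intro h hh
  rw [mem_Wc, mem_dLT_iff] at hh
  rw [mem_dLT_iff]
  intro h0
  have := hh.2.2 h0
  omega

instance Wc_fin {k p q r : ℕ} : FiniteDimensional K (Wc K k p q r) :=
  Submodule.finiteDimensional_of_le (Wc_le (K := K))

theorem dvd_mul_pows {p r : ℕ} {h : Polynomial K} (h1 : Polynomial.X ^ p ∣ h)
    (h2 : (Polynomial.X + 1) ^ r ∣ h) : Polynomial.X ^ p * (Polynomial.X + 1) ^ r ∣ h := by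
  refine IsCoprime.mul_dvd (IsCoprime.pow ?_) h1 h2
  exact ⟨-1, 1, by ring⟩

theorem natDegree_pows {p r : ℕ} :
    (Polynomial.X ^ p * (Polynomial.X + 1) ^ r : Polynomial K).natDegree = p + r := by
  have hX1 : (Polynomial.X + 1 : Polynomial K) ≠ 0 := Polynomial.X_add_C_ne_zero 1
  rw [Polynomial.natDegree_mul (pow_ne_zero _ Polynomial.X_ne_zero) (pow_ne_zero _ hX1),
    Polynomial.natDegree_pow, Polynomial.natDegree_pow, Polynomial.natDegree_X,
    show (Polynomial.X + 1 : Polynomial K) = Polynomial.X + Polynomial.C 1 by simp,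
    Polynomial.natDegree_X_add_C]
  ring

theorem pows_ne_zero {p r : ℕ} :
    (Polynomial.X ^ p * (Polynomial.X + 1) ^ r : Polynomial K) ≠ 0 := by
  have hX1 : (Polynomial.X + 1 : Polynomial K) ≠ 0 := Polynomial.X_add_C_ne_zero 1
  exact mul_ne_zero (pow_ne_zero _ Polynomial.X_ne_zero) (pow_ne_zero _ hX1)

theorem deg_bound {p r : ℕ} {h : Polynomial K} (h0 : h ≠ 0) (h1 : Polynomial.X ^ p ∣ h)
    (h2 : (Polynomial.X + 1) ^ r ∣ h) : p + r ≤ h.natDegree := by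
  have := Polynomial.natDegree_le_of_dvd (dvd_mul_pows h1 h2) h0
  rwa [natDegree_pows] at this

/-- structure of elements of `Wc` -/
theorem Wc_factor {k p q r : ℕ} {h : Polynomial K} (hh : h ∈ Wc K k p q r) :
    ∃ u : Polynomial K, h = Polynomial.X ^ p * (Polynomial.X + 1) ^ r * u ∧
      (h = 0 ∨ (p + q + r ≤ k ∧ u.natDegree ≤ k - (p + q + r))) := by
  by_cases h0 : h = 0
  · exact ⟨0, by simp [h0], Or.inl h0⟩
  obtain ⟨u, hu⟩ := dvd_mul_pows hh.1 hh.2.1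
  have hu0 : u ≠ 0 := by rintro rfl; simp at hu; exact h0 hu
  rw [mem_Wc' h0] at hh
  have := hh.2.2
  rw [hu, Polynomial.natDegree_mul pows_ne_zero hu0, natDegree_pows] at this
  exact ⟨u, hu, Or.inr ⟨by omega, by omega⟩⟩

theorem finrank_Wc_ge (k p q r : ℕ) : k + 1 - (p + q + r) ≤ Module.finrank K (Wc K k p q r) := by
  let g : Polynomial K := Polynomial.X ^ p * (Polynomial.X + 1) ^ r
  let φ : Polynomial.degreeLT K (k + 1 - (p+q+r)) →ₗ[K] Wc K k p q r :=
    { toFun := fun u => ⟨g * u.1, by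
        have := u.2
        rw [mem_dLT_iff] at this
        by_cases hu : u.1 = 0
        · rw [hu, mul_zero]; exact Submodule.zero_mem _
        · rw [mem_Wc' (mul_ne_zero pows_ne_zero hu)]
          refine ⟨⟨(Polynomial.X + 1) ^ r * u.1, by ring⟩,
            ⟨(Polynomial.X) ^ p * u.1, by ring⟩, ?_⟩
          rw [Polynomial.natDegree_mul pows_ne_zero hu, natDegree_pows]
          have := this hu
          omega⟩
      map_add' := fun u v => Subtype.ext (mul_add g u.1 v.1)
      map_smul' := fun c u => Subtype.ext (mul_smul_comm c g u.1) }
  have hφ : Function.Injective φ := by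
    intro u v huv
    have : g * u.1 = g * v.1 := congrArg Subtype.val huv
    exact Subtype.ext (mul_left_cancel₀ pows_ne_zero this)
  have := LinearMap.finrank_le_finrank_of_injective hφ
  rwa [(Polynomial.degreeLTEquiv K _).finrank_eq, Module.finrank_fin_fun] at this

/-- rank-nullity for the sum map of four subspaces -/
theorem sum_rank (F : Fin 4 → Submodule K (Polynomial K)) [∀ i, FiniteDimensional K (F i)]
    (n : ℕ)
    (J : Submodule K (Polynomial K)) (hJ : ∀ h : Fin 4 → Polynomial K, (∀ i, h i ∈ F i) →
      ∑ i, h i ∈ J)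
    (v : Fin 4 → Polynomial K)
    (hker : ∀ h : Fin 4 → Polynomial K, (∀ i, h i ∈ F i) → ∑ i, h i = 0 → ∃ c : K, h = c • v)
    (hJn : J ≤ Polynomial.degreeLT K n) :
    ∑ i, Module.finrank K (F i) ≤ Module.finrank K J + Module.finrank K (Submodule.span K {v}) := by
  have : FiniteDimensional K J := Submodule.finiteDimensional_of_le hJn
  let φ : (∀ i, F i) →ₗ[K] J :=
    { toFun := fun h => ⟨∑ i, (h i).1, hJ _ (fun i => (h i).2)⟩
      map_add' := fun h h' => by ext1; simp [Finset.sum_add_distrib]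
      map_smul' := fun c h => by ext1; simp [Finset.smul_sum] }
  have h1 := LinearMap.finrank_range_add_finrank_ker φ
  rw [Module.finrank_pi_fintype] at h1
  have h2 : Module.finrank K (LinearMap.range φ) ≤ Module.finrank K J :=
    Submodule.finrank_le _
  have h3 : Module.finrank K (LinearMap.ker φ) ≤ Module.finrank K (Submodule.span K {v}) := by
    let ψ : (LinearMap.ker φ) →ₗ[K] (Fin 4 → Polynomial K) :=
      { toFun := fun h i => (h.1 i).1
        map_add' := fun h h' => by ext1; simp
        map_smul' := fun c h => by ext1; simp }
    have hψ : Function.Injective ψ := by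
      intro x y hxy
      apply Subtype.ext; funext i; apply Subtype.ext
      exact congrFun hxy i
    have hr : ∀ x, ψ x ∈ Submodule.span K {v} := by
      intro x
      obtain ⟨c, hc⟩ := hker (ψ x) (fun i => (x.1 i).2) (congrArg Subtype.val x.2)
      rw [hc]; exact Submodule.smul_mem _ _ (Submodule.mem_span_singleton_self v)
    have := LinearMap.finrank_le_finrank_of_injective
      (f := ψ.codRestrict (Submodule.span K {v}) hr)
      (by intro x y hxy; exact hψ (congrArg Subtype.val hxy))
    exact this
  omega

/-! Wronskian -/
theorem wr_deg [CharZero K] {p q : Polynomial K} (hp : p ≠ 0) (hq : q ≠ 0)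
    (h : p * Polynomial.derivative q = q * Polynomial.derivative p) :
    p.natDegree = q.natDegree := by
  have h1 : (p * Polynomial.derivative q).coeff (p.natDegree + q.natDegree - 1) =
    (q * Polynomial.derivative p).coeff (p.natDegree + q.natDegree - 1) := by rw [h]
  by_contra hne
  by_cases hp0 : p.natDegree = 0
  · rw [Polynomial.natDegree_eq_zero] at hp0
    obtain ⟨x, rfl⟩ := hp0
    simp only [Polynomial.derivative_C, mul_zero, mul_eq_zero] at h
    have hd := h.resolve_left hp
    have := Polynomial.derivative_eq_zero.mp hd
    simp [this] at hne
  by_cases hq0 : q.natDegree = 0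
  · rw [Polynomial.natDegree_eq_zero] at hq0
    obtain ⟨x, rfl⟩ := hq0
    simp only [Polynomial.derivative_C, mul_zero] at h
    have hd := (mul_eq_zero.mp h.symm).resolve_left hq
    have := Polynomial.derivative_eq_zero.mp hd
    simp [this] at hne
  rw [show p.natDegree + q.natDegree - 1 = p.natDegree + (q.natDegree - 1) by omega,
    Polynomial.coeff_mul_add_eq_of_natDegree_le le_rfl (Polynomial.natDegree_derivative_le q),
    show p.natDegree + (q.natDegree - 1) = q.natDegree + (p.natDegree - 1) by omega,
    Polynomial.coeff_mul_add_eq_of_natDegree_le le_rfl (Polynomial.natDegree_derivative_le p),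
    Polynomial.coeff_derivative, Polynomial.coeff_derivative] at h1
  rw [Nat.sub_add_cancel (by omega), Nat.sub_add_cancel (by omega)] at h1
  have e1 : ((q.natDegree - 1 : ℕ) : K) + 1 = q.natDegree := by
    rw [← Nat.cast_succ]; congr 1; omega
  have e2 : ((p.natDegree - 1 : ℕ) : K) + 1 = p.natDegree := by
    rw [← Nat.cast_succ]; congr 1; omega
  rw [e1, e2] at h1
  have hpl : p.coeff p.natDegree ≠ 0 := Polynomial.leadingCoeff_ne_zero.mpr hp
  have hql : q.coeff q.natDegree ≠ 0 := Polynomial.leadingCoeff_ne_zero.mpr hq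
  have : (q.natDegree : K) = p.natDegree := by
    apply mul_left_cancel₀ (mul_ne_zero hpl hql)
    linear_combination h1
  exact hne (by exact_mod_cast this.symm)

theorem wr_const [CharZero K] {p q : Polynomial K} (hq : q ≠ 0)
    (h : p * Polynomial.derivative q = q * Polynomial.derivative p) :
    ∃ c : K, p = Polynomial.C c * q := by
  by_cases hp : p = 0
  · exact ⟨0, by simp [hp]⟩
  have hd := wr_deg hp hq h
  refine ⟨p.leadingCoeff / q.leadingCoeff, ?_⟩
  by_contra hne
  set c := p.leadingCoeff / q.leadingCoeff with hc
  have hc0 : c ≠ 0 := div_ne_zero (Polynomial.leadingCoeff_ne_zero.mpr hp)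
    (Polynomial.leadingCoeff_ne_zero.mpr hq)
  have hr : p - Polynomial.C c * q ≠ 0 := sub_ne_zero.mpr hne
  have h2 := wr_deg hr hq (by
    simp only [Polynomial.derivative_sub, Polynomial.derivative_mul, Polynomial.derivative_C]
    linear_combination h)
  have h3 : (p - Polynomial.C c * q).coeff q.natDegree = 0 := by
    rw [Polynomial.coeff_sub, Polynomial.coeff_C_mul, ← hd]
    have : q.coeff p.natDegree = q.leadingCoeff := by rw [hd]; rfl
    rw [this, hc, div_mul_cancel₀ _ (Polynomial.leadingCoeff_ne_zero.mpr hq)]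
    exact sub_self _
  rw [← h2] at h3
  exact hr (Polynomial.leadingCoeff_eq_zero.mp h3)

end Core


section Core2
variable {K : Type*} [Field K]

theorem Wc_mul {k k' p p' q q' r r' : ℕ} {h h' : Polynomial K} (hh : h ∈ Wc K k p q r)
    (hh' : h' ∈ Wc K k' p' q' r') : h * h' ∈ Wc K (k + k') (p + p') (q + q') (r + r') := by
  by_cases h0 : h = 0
  · subst h0; rw [zero_mul]; exact Submodule.zero_mem _
  by_cases h0' : h' = 0
  · subst h0'; rw [mul_zero]; exact Submodule.zero_mem _
  rw [mem_Wc' h0] at hh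
  rw [mem_Wc' h0'] at hh'
  rw [mem_Wc' (mul_ne_zero h0 h0'), Polynomial.natDegree_mul h0 h0', pow_add, pow_add]
  exact ⟨mul_dvd_mul hh.1 hh'.1, mul_dvd_mul hh.2.1 hh'.2.1, by omega⟩

theorem C_mul_mem {S : Submodule K (Polynomial K)} {h : Polynomial K} (c : K) (hh : h ∈ S) :
    Polynomial.C c * h ∈ S := by
  rw [← Polynomial.smul_eq_C_mul]; exact Submodule.smul_mem _ _ hh

theorem of_C_mul_mem {S : Submodule K (Polynomial K)} {h : Polynomial K} {c : K} (hc : c ≠ 0)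
    (hh : Polynomial.C c * h ∈ S) : h ∈ S := by
  have := C_mul_mem c⁻¹ hh
  rwa [← mul_assoc, ← Polynomial.C_mul, inv_mul_cancel₀ hc, Polynomial.C_1, one_mul] at this

theorem final_bound {N p q r p1 p2 q1 q2 r1 r2 : ℕ} {H : Polynomial K} (H0 : H ≠ 0)
    (h1 : H ∈ Wc K N p q1 r1) (h2 : H ∈ Wc K N p1 q r2) (h3 : H ∈ Wc K N p2 q2 r) :
    p + q + r ≤ N := by
  rw [mem_Wc' H0] at h1 h2 h3
  have := deg_bound H0 h1.1 h3.2.1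
  omega

/-- the univariate syzygies in degree `k` -/
def Syz (K : Type*) [Field K] (P Q R : Fin 4 → ℕ) (k : ℕ) (h : Fin 4 → Polynomial K) : Prop :=
  (∀ i, h i ∈ Wc K k (P i) (Q i) (R i)) ∧ ∑ i, h i = 0

/-- the univariate ideal in degree `k`, using only the generators in `S` -/
def Jm (K : Type*) [Field K] (P Q R : Fin 4 → ℕ) (S : Set (Fin 4)) (k : ℕ) :
    Submodule K (Polynomial K) where
  carrier := {p | ∃ h : Fin 4 → Polynomial K, (∀ i, h i ∈ Wc K k (P i) (Q i) (R i)) ∧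
    (∀ i, i ∉ S → h i = 0) ∧ ∑ i, h i = p}
  add_mem' := by
    rintro _ _ ⟨h, h1, h2, rfl⟩ ⟨h', h1', h2', rfl⟩
    refine ⟨h + h', fun i => Submodule.add_mem _ (h1 i) (h1' i), fun i hi => ?_, ?_⟩
    · simp [h2 i hi, h2' i hi]
    · simp [Finset.sum_add_distrib]
  zero_mem' := ⟨0, fun i => Submodule.zero_mem _, fun i _ => rfl, by simp⟩
  smul_mem' := by
    rintro c _ ⟨h, h1, h2, rfl⟩
    refine ⟨c • h, fun i => Submodule.smul_mem _ _ (h1 i), fun i hi => ?_, ?_⟩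
    · simp [h2 i hi]
    · simp [Finset.smul_sum]

variable {P Q R : Fin 4 → ℕ}

theorem Jm_le (S : Set (Fin 4)) (k : ℕ) : Jm K P Q R S k ≤ Polynomial.degreeLT K (k+1) := by
  rintro _ ⟨h, h1, h2, rfl⟩
  exact Submodule.sum_mem _ (fun i _ => Wc_le (h1 i))

theorem Jm_mono_set {S : Set (Fin 4)} {k : ℕ} {p : Polynomial K} (h : p ∈ Jm K P Q R S k) :
    p ∈ Jm K P Q R Set.univ k := by
  obtain ⟨h, h1, h2, h3⟩ := h
  exact ⟨h, h1, fun i hi => absurd (Set.mem_univ i) hi, h3⟩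

theorem Syz_mono {k k' : ℕ} (hk : k ≤ k') {h : Fin 4 → Polynomial K} (hh : Syz K P Q R k h) :
    Syz K P Q R k' h := ⟨fun i => Wc_mono hk (hh.1 i), hh.2⟩

theorem Syz_theta {k : ℕ} {h : Fin 4 → Polynomial K} (hh : Syz K P Q R k h) :
    Syz K P Q R (k+1) (fun i => Polynomial.X * (Polynomial.X + 1) * Polynomial.derivative (h i)) := by
  refine ⟨fun i => Wc_theta (hh.1 i), ?_⟩
  rw [← Finset.mul_sum, ← Polynomial.derivative_sum, hh.2]
  simp

theorem Syz_smul {k : ℕ} {h : Fin 4 → Polynomial K} (c : K) (hh : Syz K P Q R k h) :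
    Syz K P Q R k (fun i => Polynomial.C c * h i) := by
  refine ⟨fun i => C_mul_mem c (hh.1 i), ?_⟩
  rw [← Finset.mul_sum, hh.2, mul_zero]

theorem Syz_add {k : ℕ} {h h' : Fin 4 → Polynomial K} (hh : Syz K P Q R k h)
    (hh' : Syz K P Q R k h') : Syz K P Q R k (fun i => h i + h' i) := by
  refine ⟨fun i => Submodule.add_mem _ (hh.1 i) (hh'.1 i), ?_⟩
  rw [Finset.sum_add_distrib, hh.2, hh'.2, add_zero]

theorem quad {i j l m : Fin 4} (h1 : i ≠ j) (h2 : i ≠ l) (h3 : i ≠ m) (h4 : j ≠ l) (h5 : j ≠ m)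
    (h6 : l ≠ m) {M : Type*} [AddCommMonoid M] (f : Fin 4 → M) :
    ∑ x, f x = f i + (f j + (f l + f m)) := by
  have : (Finset.univ : Finset (Fin 4)) = {i, j, l, m} := by
    revert i j l m; decide
  rw [this, Finset.sum_insert (by simp [*]), Finset.sum_insert (by simp [*]),
    Finset.sum_insert (by simp [*]), Finset.sum_singleton]

theorem quad_cov {i j l m : Fin 4} (h1 : i ≠ j) (h2 : i ≠ l) (h3 : i ≠ m) (h4 : j ≠ l)
    (h5 : j ≠ m) (h6 : l ≠ m) (x : Fin 4) : x = i ∨ x = j ∨ x = l ∨ x = m := by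
  revert i j l m x; decide

theorem quad_ex : ∀ {i j : Fin 4}, i ≠ j → ∃ l m : Fin 4, i ≠ l ∧ i ≠ m ∧ j ≠ l ∧ j ≠ m ∧ l ≠ m := by
  decide

theorem quad_ex1 : ∀ (i : Fin 4), ∃ j l m : Fin 4, i ≠ j ∧ i ≠ l ∧ i ≠ m ∧ j ≠ l ∧ j ≠ m ∧ l ≠ m := by
  decide

theorem Syz_pair {k : ℕ} {i j : Fin 4} (hij : i ≠ j) {r : Polynomial K}
    (hi : r ∈ Wc K k (P i) (Q i) (R i)) (hj : r ∈ Wc K k (P j) (Q j) (R j)) :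
    Syz K P Q R k (fun x => if x = i then r else if x = j then -r else 0) := by
  constructor
  · intro x
    by_cases hx : x = i
    · subst hx; simpa using hi
    by_cases hx' : x = j
    · subst hx'; simpa [hx] using hj
    · simp [hx, hx']
  · obtain ⟨l, m, h2, h3, h4, h5, h6⟩ := quad_ex hij
    rw [quad hij h2 h3 h4 h5 h6]
    simp [hij.symm, h2.symm, h3.symm, h4.symm, h5.symm]

/-- descent -/
theorem reg (S : Set (Fin 4)) (e : ℕ) (u : K) (hu : u ≠ 0) (hu1 : u ≠ -1)
    (hspan : ∀ v : Fin 4 → K, (∀ i, i ∉ S → v i = 0) → ∑ i, v i = 0 →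
      ∃ s, Syz K P Q R (e+1) s ∧ (∀ i, i ∉ S → s i = 0) ∧ ∀ i, (s i).eval u = v i)
    (hbig : ∃ N0, ∀ N, N0 ≤ N → ∀ p ∈ Polynomial.degreeLT K (N+1), p ∈ Jm K P Q R S N) :
    ∀ p ∈ Polynomial.degreeLT K (e+1), p ∈ Jm K P Q R S e := by
  have step : ∀ m, e ≤ m → ∀ p, (Polynomial.X - Polynomial.C u) * p ∈ Jm K P Q R S (m+1) →
      p ∈ Jm K P Q R S m := by
    rintro m hm p ⟨h, h1, h2, h3⟩
    obtain ⟨s, hs, hs0, hsv⟩ := hspan (fun i => (h i).eval u) (fun i hi => by simp [h2 i hi]) (by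
      rw [← Polynomial.eval_finsetSum, h3]; simp)
    have hs' := Syz_mono (show e + 1 ≤ m + 1 by omega) hs
    have hd : ∀ i, ∃ g, h i - s i = (Polynomial.X - Polynomial.C u) * g := by
      intro i
      have : (Polynomial.X - Polynomial.C u) ∣ h i - s i := by
        rw [Polynomial.dvd_iff_isRoot]; simp [hsv i]
      exact this
    choose g hg using hd
    have hXu := Polynomial.X_sub_C_ne_zero u
    refine ⟨g, fun i => Wc_div hu hu1 ?_, fun i hi => ?_, ?_⟩
    · rw [← hg]; exact Submodule.sub_mem _ (h1 i) (hs'.1 i)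
    · have := hg i
      rw [h2 i hi, hs0 i hi, sub_zero] at this
      exact (mul_eq_zero.mp this.symm).resolve_left hXu
    · apply mul_left_cancel₀ hXu
      rw [Finset.mul_sum, ← h3, ← Finset.sum_congr rfl (fun i _ => hg i),
        Finset.sum_sub_distrib, hs.2, sub_zero]
  have iter : ∀ j p, (Polynomial.X - Polynomial.C u) ^ j * p ∈ Jm K P Q R S (e + j) →
      p ∈ Jm K P Q R S e := by
    intro j
    induction j with
    | zero => intro p hp; simpa using hp
    | succ j ih =>
      intro p hp
      apply ih
      apply step _ (by omega)
      rw [← mul_assoc, ← pow_succ']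
      exact hp
  intro p hp
  obtain ⟨N0, hN⟩ := hbig
  apply iter N0
  apply hN _ (by omega)
  rw [mem_dLT_iff] at hp ⊢
  intro h0
  have hp0 : p ≠ 0 := by rintro rfl; simp at h0
  rw [Polynomial.natDegree_mul (pow_ne_zero _ (Polynomial.X_sub_C_ne_zero u)) hp0,
    Polynomial.natDegree_pow, Polynomial.natDegree_X_sub_C]
  have := hp hp0
  omega

theorem exists_eval [CharZero K] {D : Polynomial K} (hD : D ≠ 0) :
    ∃ u : K, u ≠ 0 ∧ u ≠ -1 ∧ D.eval u ≠ 0 := by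
  have hX1 : (Polynomial.X + 1 : Polynomial K) ≠ 0 := Polynomial.X_add_C_ne_zero 1
  have h := mul_ne_zero (mul_ne_zero Polynomial.X_ne_zero hX1) hD
  obtain ⟨u, hu⟩ : ∃ u, Polynomial.eval u (Polynomial.X * (Polynomial.X + 1) * D) ≠ 0 := by
    by_contra! hc
    exact h (Polynomial.funext (by simpa using hc))
  simp only [Polynomial.eval_mul, Polynomial.eval_add, Polynomial.eval_X, Polynomial.eval_one] at hu
  refine ⟨u, ?_, ?_, ?_⟩
  · rintro rfl; simp at hu
  · rintro rfl; simp at hu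
  · intro h; simp [h] at hu

/-- determinant of the first three coordinates -/
def det3 {A : Type*} [CommRing A] (s t r : Fin 4 → A) : A :=
  (s 1 * t 2 - s 2 * t 1) * r 0 + (s 2 * t 0 - s 0 * t 2) * r 1 + (s 0 * t 1 - s 1 * t 0) * r 2

theorem regA [CharZero K] {e : ℕ} {s1 s2 s3 : Fin 4 → Polynomial K}
    (h1 : Syz K P Q R (e+1) s1) (h2 : Syz K P Q R (e+1) s2) (h3 : Syz K P Q R (e+1) s3)
    (hdet : det3 s1 s2 s3 ≠ 0)
    (hbig : ∃ N0, ∀ N, N0 ≤ N → ∀ p ∈ Polynomial.degreeLT K (N+1), p ∈ Jm K P Q R Set.univ N) :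
    ∀ p ∈ Polynomial.degreeLT K (e+1), p ∈ Jm K P Q R Set.univ e := by
  obtain ⟨u, hu, hu1, hD⟩ := exists_eval hdet
  refine reg _ e u hu hu1 ?_ hbig
  intro v _ hv
  set E : (Fin 4 → Polynomial K) → Fin 4 → K := fun s i => (s i).eval u with hE
  have hD' : det3 (E s1) (E s2) (E s3) ≠ 0 := by
    simpa [det3, hE] using hD
  set D := det3 (E s1) (E s2) (E s3) with hDdef
  let s : Fin 4 → Polynomial K := fun i =>
    Polynomial.C (det3 (E s2) (E s3) v / D) * s1 i + Polynomial.C (det3 (E s3) (E s1) v / D) * s2 i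
    + Polynomial.C (det3 (E s1) (E s2) v / D) * s3 i
  have hs : Syz K P Q R (e+1) s :=
    Syz_add (Syz_add (Syz_smul _ h1) (Syz_smul _ h2)) (Syz_smul _ h3)
  have hev : ∀ i, (s i).eval u = (det3 (E s2) (E s3) v / D) * E s1 i
      + (det3 (E s3) (E s1) v / D) * E s2 i + (det3 (E s1) (E s2) v / D) * E s3 i := by
    intro i; simp [s, hE]
  have e0 : (s 0).eval u = v 0 := by
    rw [hev]; field_simp; rw [hDdef]; simp only [det3]; ring
  have e1 : (s 1).eval u = v 1 := by
    rw [hev]; field_simp; rw [hDdef]; simp only [det3]; ring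
  have e2 : (s 2).eval u = v 2 := by
    rw [hev]; field_simp; rw [hDdef]; simp only [det3]; ring
  have e3 : (s 3).eval u = v 3 := by
    have := congrArg (Polynomial.eval u) hs.2
    rw [Polynomial.eval_finsetSum, Fin.sum_univ_four, e0, e1, e2, Polynomial.eval_zero] at this
    rw [Fin.sum_univ_four] at hv
    linear_combination this - hv
  refine ⟨s, hs, fun i hi => absurd (Set.mem_univ i) hi, ?_⟩
  intro i
  fin_cases i
  exacts [e0, e1, e2, e3]

theorem regA' [CharZero K] {e : ℕ} {s1 s2 : Fin 4 → Polynomial K}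
    (h1 : Syz K P Q R (e+1) s1) (h2 : Syz K P Q R (e+1) s2) {i j l m : Fin 4}
    (n1 : i ≠ j) (n2 : i ≠ l) (n3 : i ≠ m) (n4 : j ≠ l) (n5 : j ≠ m) (n6 : l ≠ m)
    (z1 : s1 m = 0) (z2 : s2 m = 0)
    (hdet : s1 i * s2 j - s1 j * s2 i ≠ 0)
    (hbig : ∃ N0, ∀ N, N0 ≤ N → ∀ p ∈ Polynomial.degreeLT K (N+1), p ∈ Jm K P Q R {x | x ≠ m} N) :
    ∀ p ∈ Polynomial.degreeLT K (e+1), p ∈ Jm K P Q R Set.univ e := by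
  obtain ⟨u, hu, hu1, hD⟩ := exists_eval hdet
  suffices h : ∀ p ∈ Polynomial.degreeLT K (e+1), p ∈ Jm K P Q R {x | x ≠ m} e from
    fun p hp => Jm_mono_set (h p hp)
  refine reg _ e u hu hu1 ?_ hbig
  intro v hvm hv
  have hvm' : v m = 0 := hvm m (by simp)
  set E : (Fin 4 → Polynomial K) → Fin 4 → K := fun s i => (s i).eval u with hE
  have hD' : E s1 i * E s2 j - E s1 j * E s2 i ≠ 0 := by
    simpa [hE] using hD
  set D := E s1 i * E s2 j - E s1 j * E s2 i with hDdef
  let s : Fin 4 → Polynomial K := fun x =>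
    Polynomial.C ((v i * E s2 j - v j * E s2 i) / D) * s1 x
    + Polynomial.C ((v j * E s1 i - v i * E s1 j) / D) * s2 x
  have hs : Syz K P Q R (e+1) s := Syz_add (Syz_smul _ h1) (Syz_smul _ h2)
  have hev : ∀ x, (s x).eval u = ((v i * E s2 j - v j * E s2 i) / D) * E s1 x
      + ((v j * E s1 i - v i * E s1 j) / D) * E s2 x := by
    intro i; simp [s, hE]
  have e0 : (s i).eval u = v i := by
    rw [hev]; field_simp; rw [hDdef]; ring
  have e1 : (s j).eval u = v j := by
    rw [hev]; field_simp; rw [hDdef]; ring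
  have sm : s m = 0 := by simp [s, z1, z2]
  have e3 : (s l).eval u = v l := by
    have := congrArg (Polynomial.eval u) hs.2
    rw [Polynomial.eval_finsetSum, quad n1 n2 n3 n4 n5 n6, e0, e1, sm, Polynomial.eval_zero] at this
    rw [quad n1 n2 n3 n4 n5 n6, hvm'] at hv
    linear_combination this - hv
  refine ⟨s, hs, ?_, ?_⟩
  · intro x hx
    have : x = m := by simpa using hx
    rw [this, sm]
  · intro x
    rcases quad_cov n1 n2 n3 n4 n5 n6 x with rfl | rfl | rfl | rfl
    · exact e0
    · exact e1
    · exact e3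
    · rw [sm, hvm']; simp

theorem vecconst [CharZero K] {n0 n1 n2 : Polynomial K}
    (h01 : n0 * Polynomial.derivative n1 = n1 * Polynomial.derivative n0)
    (h02 : n0 * Polynomial.derivative n2 = n2 * Polynomial.derivative n0)
    (h12 : n1 * Polynomial.derivative n2 = n2 * Polynomial.derivative n1)
    (hne : ¬ (n0 = 0 ∧ n1 = 0 ∧ n2 = 0)) :
    ∃ H : Polynomial K, H ≠ 0 ∧ ∃ l0 l1 l2 : K, ¬ (l0 = 0 ∧ l1 = 0 ∧ l2 = 0) ∧
      n0 = Polynomial.C l0 * H ∧ n1 = Polynomial.C l1 * H ∧ n2 = Polynomial.C l2 * H := by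
  by_cases h0 : n0 = 0
  · by_cases h1 : n1 = 0
    · have h2 : n2 ≠ 0 := fun h => hne ⟨h0, h1, h⟩
      exact ⟨n2, h2, 0, 0, 1, by simp, by simp [h0], by simp [h1], by simp⟩
    · obtain ⟨c, hc⟩ := wr_const h1 h12.symm
      exact ⟨n1, h1, 0, 1, c, by simp, by simp [h0], by simp, hc⟩
  · obtain ⟨c, hc⟩ := wr_const h0 h01.symm
    obtain ⟨d, hd⟩ := wr_const h0 h02.symm
    exact ⟨n0, h0, 1, c, d, by simp, by simp, hc, hd⟩

end Core2


section Core3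

/-- the pattern lemma for four elements -/
theorem pattern {T : Type*} (L : Fin 4 → T) :
    Function.Injective L ∨ (∃ i j l m : Fin 4, i ≠ j ∧ i ≠ l ∧ i ≠ m ∧ j ≠ l ∧ j ≠ m ∧ l ≠ m ∧
      L i = L j ∧ ((L l = L i ∧ L m = L i) ∨ (L l = L i ∧ L m ≠ L i) ∨
        (L l ≠ L i ∧ L m = L l) ∨ (L l ≠ L i ∧ L m ≠ L i ∧ L l ≠ L m))) := by
  by_cases hinj : Function.Injective L
  · exact Or.inl hinj
  right
  simp only [Function.Injective, not_forall] at hinj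
  obtain ⟨i, j, hL, hij⟩ := hinj
  obtain ⟨l, m, h2, h3, h4, h5, h6⟩ := quad_ex hij
  by_cases hl : L l = L i
  · by_cases hm : L m = L i
    · exact ⟨i, j, l, m, hij, h2, h3, h4, h5, h6, hL, Or.inl ⟨hl, hm⟩⟩
    · exact ⟨i, j, l, m, hij, h2, h3, h4, h5, h6, hL, Or.inr (Or.inl ⟨hl, hm⟩)⟩
  · by_cases hm : L m = L i
    · exact ⟨i, j, m, l, hij, h3, h2, h5, h4, h6.symm, hL, Or.inr (Or.inl ⟨hm, hl⟩)⟩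
    · by_cases hlm : L l = L m
      · exact ⟨i, j, l, m, hij, h2, h3, h4, h5, h6, hL, Or.inr (Or.inr (Or.inl ⟨hl, hlm.symm⟩))⟩
      · exact ⟨i, j, l, m, hij, h2, h3, h4, h5, h6, hL, Or.inr (Or.inr (Or.inr ⟨hl, hm, hlm⟩))⟩

variable {K : Type*} [Field K] {P Q R : Fin 4 → ℕ}

theorem cross_zero {s t : Fin 4 → Polynomial K} {i j l m : Fin 4}
    (n1 : i ≠ j) (n2 : i ≠ l) (n3 : i ≠ m) (n4 : j ≠ l) (n5 : j ≠ m) (n6 : l ≠ m)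
    (hs : ∑ x, s x = 0) (ht : ∑ x, t x = 0) (sm : s m = 0) (tm : t m = 0)
    (h : s i * t j - s j * t i = 0) : ∀ x y, s x * t y - s y * t x = 0 := by
  rw [quad n1 n2 n3 n4 n5 n6, sm] at hs
  rw [quad n1 n2 n3 n4 n5 n6, tm] at ht
  have sl : s l = - s i - s j := by linear_combination hs
  have tl : t l = - t i - t j := by linear_combination ht
  intro x y
  rcases quad_cov n1 n2 n3 n4 n5 n6 x with rfl | rfl | rfl | rfl <;>
  rcases quad_cov n1 n2 n3 n4 n5 n6 y with rfl | rfl | rfl | rfl <;>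
  grind

/-- no constant subspace of rank two -/
theorem lemC [CharZero K] (hP1 : P 1 = 0) (hP2 : P 2 = 0) (hQ0 : Q 0 = 0) (hQ2 : Q 2 = 0)
    (hR0 : R 0 = 0) (hR1 : R 1 = 0)
    (hbig : ∀ m, ∃ N0, ∀ N, N0 ≤ N → ∀ p ∈ Polynomial.degreeLT K (N+1),
      p ∈ Jm K P Q R {x | x ≠ m} N) {k : ℕ}
    (hNS : ∃ p ∈ Polynomial.degreeLT K (k+1), p ∉ Jm K P Q R Set.univ k)
    {σ : Fin 4 → Polynomial K} (hσ : Syz K P Q R k σ) (hNI : ∀ i j, i ≠ j → σ i + σ j ≠ 0)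
    {s t : Fin 4 → Polynomial K} (hs : Syz K P Q R (k+1) s) (ht : Syz K P Q R (k+1) t)
    {H : Polynomial K} (H0 : H ≠ 0) (L : Fin 4 → K) (hL3 : L 3 = 0)
    (hLne : ¬ (L 0 = 0 ∧ L 1 = 0 ∧ L 2 = 0))
    (hn0 : s 1 * t 2 - s 2 * t 1 = Polynomial.C (L 0) * H)
    (hn1 : s 2 * t 0 - s 0 * t 2 = Polynomial.C (L 1) * H)
    (hn2 : s 0 * t 1 - s 1 * t 0 = Polynomial.C (L 2) * H)
    (hL : ∀ r, Syz K P Q R (k+1) r → ∑ i, Polynomial.C (L i) * r i = 0) : False := by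
  have hCne : ∀ {x y : K}, x ≠ y → Polynomial.C x - Polynomial.C y ≠ 0 := by
    intro x y hxy
    rw [← Polynomial.C_sub]
    exact Polynomial.C_ne_zero.mpr (sub_ne_zero.mpr hxy)
  have hindep : ¬ ∀ x y, s x * t y - s y * t x = 0 := by
    intro h
    apply hLne
    refine ⟨?_, ?_, ?_⟩
    · have := h 1 2; rw [hn0] at this; simpa [H0] using this
    · have := h 2 0; rw [hn1] at this; simpa [H0] using this
    · have := h 0 1; rw [hn2] at this; simpa [H0] using this
  have pair : ∀ i j, i ≠ j → L i ≠ L j → ∀ r, r ∈ Wc K (k+1) (P i) (Q i) (R i) →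
      r ∈ Wc K (k+1) (P j) (Q j) (R j) → r = 0 := by
    intro i j hij hLij r hi hj
    have := hL _ (Syz_pair hij hi hj)
    obtain ⟨l, m, h2, h3, h4, h5, h6⟩ := quad_ex hij
    rw [quad hij h2 h3 h4 h5 h6] at this
    simp only [if_true, hij.symm, h2.symm, h3.symm, h4.symm, h5.symm, if_false] at this
    have h' : (Polynomial.C (L i) - Polynomial.C (L j)) * r = 0 := by linear_combination this
    exact (mul_eq_zero.mp h').resolve_left (hCne hLij)
  rcases pattern L with hinj | ⟨i, j, l, m, n1, n2, n3, n4, n5, n6, hij, hc⟩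
  · -- all distinct
    have d01 : L 0 ≠ L 1 := hinj.ne (by decide)
    have d02 : L 0 ≠ L 2 := hinj.ne (by decide)
    have d12 : L 1 ≠ L 2 := hinj.ne (by decide)
    have hT : ∀ h, Syz K P Q R k h → h 3 = 0 → h = 0 := by
      intro h hh h3
      have e1 := hh.2
      have e2 := hL _ (Syz_mono (Nat.le_succ k) hh)
      rw [Fin.sum_univ_four, h3] at e1 e2
      have e3 : (Polynomial.C (L 0) - Polynomial.C (L 2)) * h 0 =
        (Polynomial.C (L 2) - Polynomial.C (L 1)) * h 1 := by
        linear_combination e2 - Polynomial.C (L 2) * e1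
      have h01 : h 0 ∈ Wc K k (P 1) (Q 1) (R 1) := by
        apply of_C_mul_mem (sub_ne_zero.mpr d02)
        rw [Polynomial.C_sub, e3, ← Polynomial.C_sub]
        exact C_mul_mem _ (hh.1 1)
      have z0 := pair 0 1 (by decide) d01 (h 0) (Wc_mono (Nat.le_succ k) (hh.1 0))
        (Wc_mono (Nat.le_succ k) h01)
      rw [z0, mul_zero] at e3
      have z1 := (mul_eq_zero.mp e3.symm).resolve_left (hCne d12.symm)
      have z2 : h 2 = 0 := by rw [z0, z1] at e1; simpa using e1
      funext i
      fin_cases i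
      exacts [z0, z1, z2, h3]
    have hlt : Jm K P Q R Set.univ k < Polynomial.degreeLT K (k+1) := by
      refine lt_of_le_of_ne (Jm_le _ _) ?_
      intro he
      obtain ⟨p, hp, hp'⟩ := hNS
      exact hp' (he ▸ hp)
    have hfr := Submodule.finrank_lt_finrank_of_lt hlt
    rw [(Polynomial.degreeLTEquiv K _).finrank_eq, Module.finrank_fin_fun] at hfr
    let F : Fin 4 → Submodule K (Polynomial K) := fun i =>
      if i = 3 then ⊥ else Wc K k (P i) (Q i) (R i)
    have hFW : ∀ i, F i ≤ Wc K k (P i) (Q i) (R i) := by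
      intro i; simp only [F]; split_ifs
      · exact bot_le
      · exact le_rfl
    have : ∀ i, FiniteDimensional K (F i) := fun i => Submodule.finiteDimensional_of_le (hFW i)
    have hr := sum_rank F (k+1) (Jm K P Q R Set.univ k)
      (fun h hh => ⟨h, fun i => hFW i (hh i), fun i hi => absurd (Set.mem_univ i) hi, rfl⟩) 0
      (fun h hh h0 => ⟨0, by
        rw [zero_smul]
        refine hT h ⟨fun i => hFW i (hh i), h0⟩ ?_
        have := hh 3
        simpa [F] using this⟩) (Jm_le _ _)
    rw [Submodule.span_zero_singleton, finrank_bot, Fin.sum_univ_four] at hr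
    have f0 : F 0 = Wc K k (P 0) (Q 0) (R 0) := rfl
    have f1 : F 1 = Wc K k (P 1) (Q 1) (R 1) := rfl
    have f2 : F 2 = Wc K k (P 2) (Q 2) (R 2) := rfl
    rw [f0, f1, f2] at hr
    have g0 := finrank_Wc_ge (K := K) k (P 0) (Q 0) (R 0)
    have g1 := finrank_Wc_ge (K := K) k (P 1) (Q 1) (R 1)
    have g2 := finrank_Wc_ge (K := K) k (P 2) (Q 2) (R 2)
    have s3 : s 3 = - s 0 - s 1 - s 2 := by
      have := hs.2; rw [Fin.sum_univ_four] at this; linear_combination this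
    have t3 : t 3 = - t 0 - t 1 - t 2 := by
      have := ht.2; rw [Fin.sum_univ_four] at this; linear_combination this
    have w : ∀ i : Fin 4, s i * t 3 - s 3 * t i ∈
        Wc K ((k+1)+(k+1)) (P i + P 3) (Q i + Q 3) (R i + R 3) := by
      intro i
      refine Submodule.sub_mem _ (Wc_mul (hs.1 i) (ht.1 3)) ?_
      rw [mul_comm]
      exact Wc_mul (ht.1 i) (hs.1 3)
    have w0 : H ∈ Wc K ((k+1)+(k+1)) (P 0 + P 3) (Q 0 + Q 3) (R 0 + R 3) := by
      apply of_C_mul_mem (sub_ne_zero.mpr d12)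
      have := w 0
      convert this using 1
      rw [s3, t3, Polynomial.C_sub]
      linear_combination hn2 - hn1
    have w1 : H ∈ Wc K ((k+1)+(k+1)) (P 1 + P 3) (Q 1 + Q 3) (R 1 + R 3) := by
      apply of_C_mul_mem (sub_ne_zero.mpr d02.symm)
      have := w 1
      convert this using 1
      rw [s3, t3, Polynomial.C_sub]
      linear_combination hn0 - hn2
    have w2 : H ∈ Wc K ((k+1)+(k+1)) (P 2 + P 3) (Q 2 + Q 3) (R 2 + R 3) := by
      apply of_C_mul_mem (sub_ne_zero.mpr d01)
      have := w 2
      convert this using 1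
      rw [s3, t3, Polynomial.C_sub]
      linear_combination hn1 - hn0
    have := final_bound H0 w0 w1 w2
    omega
  · have key : ∀ r, Syz K P Q R (k+1) r →
        (Polynomial.C (L l) - Polynomial.C (L i)) * r l
        + (Polynomial.C (L m) - Polynomial.C (L i)) * r m = 0 := by
      intro r hr
      have e1 := hr.2
      have e2 := hL r hr
      rw [quad n1 n2 n3 n4 n5 n6] at e1 e2
      rw [← hij] at e2
      linear_combination e2 - Polynomial.C (L i) * e1
    rcases hc with ⟨hl, hm⟩ | ⟨hl, hm⟩ | ⟨hl, hm⟩ | ⟨hl, hm, hlm⟩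
    · apply hLne
      have : ∀ x, L x = L i := by
        intro x
        rcases quad_cov n1 n2 n3 n4 n5 n6 x with rfl | rfl | rfl | rfl
        exacts [rfl, hij.symm, hl, hm]
      have hi : L i = 0 := by rw [← this 3, hL3]
      exact ⟨by rw [this, hi], by rw [this, hi], by rw [this, hi]⟩
    · have zm : ∀ r, Syz K P Q R (k+1) r → r m = 0 := by
        intro r hr
        have := key r hr
        rw [hl, sub_self, zero_mul, zero_add] at this
        exact (mul_eq_zero.mp this).resolve_left (hCne hm)
      have hdet : s i * t j - s j * t i ≠ 0 := fun h =>
        hindep (cross_zero n1 n2 n3 n4 n5 n6 hs.2 ht.2 (zm s hs) (zm t ht) h)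
      obtain ⟨p, hp, hp'⟩ := hNS
      exact hp' (regA' hs ht n1 n2 n3 n4 n5 n6 (zm s hs) (zm t ht) hdet (hbig m) p hp)
    · have := key σ (Syz_mono (Nat.le_succ k) hσ)
      rw [hm, ← mul_add] at this
      exact hNI l m n6 ((mul_eq_zero.mp this).resolve_left (hCne hl))
    · have zl : ∀ r, Syz K P Q R (k+1) r → r l = 0 := by
        intro r hr
        apply pair l m n6 hlm _ (hr.1 l)
        apply of_C_mul_mem (sub_ne_zero.mpr hl)
        have : Polynomial.C (L l - L i) * r l = Polynomial.C (L i - L m) * r m := by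
          rw [Polynomial.C_sub, Polynomial.C_sub]
          linear_combination key r hr
        rw [this]
        exact C_mul_mem _ (hr.1 m)
      have zm : ∀ r, Syz K P Q R (k+1) r → r m = 0 := by
        intro r hr
        have := key r hr
        rw [zl r hr, mul_zero, zero_add] at this
        exact (mul_eq_zero.mp this).resolve_left (hCne hm)
      apply hindep
      apply cross_zero n1 n2 n3 n4 n5 n6 hs.2 ht.2 (zm s hs) (zm t ht)
      have e1 := hs.2
      have e2 := ht.2
      rw [quad n1 n2 n3 n4 n5 n6, zl s hs, zm s hs] at e1
      rw [quad n1 n2 n3 n4 n5 n6, zl t ht, zm t ht] at e2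
      linear_combination s i * e2 - t i * e1

theorem lemC' [CharZero K] (hP1 : P 1 = 0) (hP2 : P 2 = 0) (hQ0 : Q 0 = 0) (hQ2 : Q 2 = 0)
    (hR0 : R 0 = 0) (hR1 : R 1 = 0)
    (hbig : ∀ m, ∃ N0, ∀ N, N0 ≤ N → ∀ p ∈ Polynomial.degreeLT K (N+1),
      p ∈ Jm K P Q R {x | x ≠ m} N) {k : ℕ}
    (hNS : ∃ p ∈ Polynomial.degreeLT K (k+1), p ∉ Jm K P Q R Set.univ k)
    {σ : Fin 4 → Polynomial K} (hσ : Syz K P Q R k σ) (hNI : ∀ i j, i ≠ j → σ i + σ j ≠ 0)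
    {s t : Fin 4 → Polynomial K} {e : ℕ} (hke : k ≤ e) (hek : e ≤ k + 1)
    (hs : Syz K P Q R e s) (ht : Syz K P Q R e t)
    (hdet : ∀ r, Syz K P Q R (e+1) r → det3 s t r = 0)
    (hne : ¬ (s 1 * t 2 - s 2 * t 1 = 0 ∧ s 2 * t 0 - s 0 * t 2 = 0 ∧ s 0 * t 1 - s 1 * t 0 = 0)) :
    False := by
  have hX1 : (Polynomial.X + 1 : Polynomial K) ≠ 0 := Polynomial.X_add_C_ne_zero 1
  have hXX : (Polynomial.X * (Polynomial.X + 1) : Polynomial K) ≠ 0 :=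
    mul_ne_zero Polynomial.X_ne_zero hX1
  have ds : det3 s t (fun i => Polynomial.derivative (s i)) = 0 := by
    have := hdet _ (Syz_theta hs)
    apply mul_left_cancel₀ hXX
    rw [mul_zero, ← this]; simp only [det3]; ring
  have dt : det3 s t (fun i => Polynomial.derivative (t i)) = 0 := by
    have := hdet _ (Syz_theta ht)
    apply mul_left_cancel₀ hXX
    rw [mul_zero, ← this]; simp only [det3]; ring
  simp only [det3] at ds dt
  obtain ⟨H, H0, l0, l1, l2, hl, e0, e1, e2⟩ := vecconst
    (n0 := s 1 * t 2 - s 2 * t 1) (n1 := s 2 * t 0 - s 0 * t 2) (n2 := s 0 * t 1 - s 1 * t 0)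
    (by simp only [Polynomial.derivative_sub, Polynomial.derivative_mul]
        linear_combination (s 2) * dt - (t 2) * ds)
    (by simp only [Polynomial.derivative_sub, Polynomial.derivative_mul]
        linear_combination (-(s 1)) * dt + (t 1) * ds)
    (by simp only [Polynomial.derivative_sub, Polynomial.derivative_mul]
        linear_combination (s 0) * dt - (t 0) * ds) hne
  refine lemC hP1 hP2 hQ0 hQ2 hR0 hR1 hbig hNS hσ hNI (Syz_mono hek hs) (Syz_mono hek ht) H0
    ![l0, l1, l2, 0] rfl hl e0 e1 e2 ?_
  intro r hr
  have := hdet r (Syz_mono (by omega) hr)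
  rw [det3, e0, e1, e2] at this
  rw [Fin.sum_univ_four]
  apply mul_left_cancel₀ H0
  rw [mul_zero, ← this]
  simp
  ring

/-- no constant syzygy of rank one -/
theorem lemR1 [CharZero K] {k : ℕ} {σ : Fin 4 → Polynomial K} (hσ : Syz K P Q R k σ)
    (hNI : ∀ i j, i ≠ j → σ i + σ j ≠ 0)
    (h2 : ∀ s t, Syz K P Q R k s → Syz K P Q R k t → ∀ x y, s x * t y - s y * t x = 0)
    (v : Fin 4 → K) (H : Polynomial K) (hv : ∀ i, σ i = Polynomial.C (v i) * H) : False := by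
  have H0 : H ≠ 0 := by
    rintro rfl
    exact hNI 0 1 (by decide) (by simp [hv])
  -- at most one zero
  have hz : ∀ i j, i ≠ j → v i = 0 → v j ≠ 0 := by
    intro i j hij hi hj
    exact hNI i j hij (by simp [hv, hi, hj])
  have : ∃ i j l, i ≠ j ∧ i ≠ l ∧ j ≠ l ∧ v i ≠ 0 ∧ v j ≠ 0 ∧ v l ≠ 0 := by
    by_cases h : ∃ m, v m = 0
    · obtain ⟨m, hm⟩ := h
      obtain ⟨j, l, i, n1, n2, n3, n4, n5, n6⟩ := quad_ex1 m
      exact ⟨j, l, i, n4, n5, n6, hz _ _ n1 hm, hz _ _ n2 hm, hz _ _ n3 hm⟩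
    · push Not at h
      exact ⟨0, 1, 2, by decide, by decide, by decide, h _, h _, h _⟩
  obtain ⟨i, j, l, n1, n2, n3, vi, vj, vl⟩ := this
  have hW : ∀ i, v i ≠ 0 → H ∈ Wc K k (P i) (Q i) (R i) := by
    intro i hi
    apply of_C_mul_mem hi
    rw [← hv]; exact hσ.1 i
  have := h2 _ _ (Syz_pair n1 (hW i vi) (hW j vj)) (Syz_pair n2 (hW i vi) (hW l vl)) j l
  simp [n1.symm, n2.symm, n3.symm, n3, H0] at this

end Core3


section Core4
variable {K : Type*} [Field K] {P Q R : Fin 4 → ℕ}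

theorem cross_all {s t : Fin 4 → Polynomial K} (hs : ∑ x, s x = 0) (ht : ∑ x, t x = 0)
    (h0 : s 1 * t 2 - s 2 * t 1 = 0) (h1 : s 2 * t 0 - s 0 * t 2 = 0)
    (h2 : s 0 * t 1 - s 1 * t 0 = 0) : ∀ x y, s x * t y - s y * t x = 0 := by
  rw [Fin.sum_univ_four] at hs ht
  have s3 : s 3 = - s 0 - s 1 - s 2 := by linear_combination hs
  have t3 : t 3 = - t 0 - t 1 - t 2 := by linear_combination ht
  intro x y
  fin_cases x <;> fin_cases y <;> simp <;> (try simp only [s3, t3]) <;> grind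

theorem Wc_vanish [CharZero K] {P Q R : Fin 4 → ℕ} {k : ℕ} {g : Fin 4 → Polynomial K}
    (hg : Syz K P Q R k g)
    (hprev : ∀ k', k' + 1 = k → ∀ h, Syz K P Q R k' h → h = 0)
    (hev : ∀ i, (g i).eval 1 = 0) : g = 0 := by
  have hd : ∀ i, ∃ f, g i = (Polynomial.X - Polynomial.C 1) * f := by
    intro i
    have : (Polynomial.X - Polynomial.C 1) ∣ g i := by
      rw [Polynomial.dvd_iff_isRoot]; exact hev i
    exact this
  choose f hf using hd
  have hXu := Polynomial.X_sub_C_ne_zero (1 : K)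
  have h1 : (1 : K) ≠ -1 := by
    intro h
    have : (2 : K) = 0 := by linear_combination h
    exact two_ne_zero this
  cases k with
  | zero =>
    funext i
    by_contra hi
    have hi' : g i ≠ 0 := hi
    have := (mem_Wc' hi').mp (hg.1 i)
    have hfi : f i ≠ 0 := by intro h; rw [hf, h, mul_zero] at hi'; exact hi' rfl
    rw [hf, Polynomial.natDegree_mul hXu hfi, Polynomial.natDegree_X_sub_C] at this
    omega
  | succ k' =>
    have : f = 0 := by
      apply hprev k' rfl
      refine ⟨fun i => Wc_div one_ne_zero h1 ?_, ?_⟩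
      · rw [← hf]; exact hg.1 i
      · apply mul_left_cancel₀ hXu
        rw [Finset.mul_sum, mul_zero, ← hg.2]
        exact Finset.sum_congr rfl (fun i _ => (hf i).symm)
    funext i
    rw [hf, this]; simp

theorem core [CharZero K] (hP1 : P 1 = 0) (hP2 : P 2 = 0) (hQ0 : Q 0 = 0) (hQ2 : Q 2 = 0)
    (hR0 : R 0 = 0) (hR1 : R 1 = 0)
    (hbig : ∀ m, ∃ N0, ∀ N, N0 ≤ N → ∀ p ∈ Polynomial.degreeLT K (N+1),
      p ∈ Jm K P Q R {x | x ≠ m} N) {k : ℕ}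
    (hNS : ∃ p ∈ Polynomial.degreeLT K (k+1), p ∉ Jm K P Q R Set.univ k)
    {σ : Fin 4 → Polynomial K} (hσ : Syz K P Q R k σ) (hNI : ∀ i j, i ≠ j → σ i + σ j ≠ 0) :
    P 0 + Q 1 + R 2 + (P 3 + Q 3 + R 3) = 3 * k + 3 ∧
    (∀ h, Syz K P Q R k h → ∃ c : K, h = c • σ) ∧
    k ≤ Module.finrank K (Jm K P Q R Set.univ k) ∧
    (∀ p ∈ Polynomial.degreeLT K (k+2), p ∈ Jm K P Q R Set.univ (k+1)) := by
  have hX1 : (Polynomial.X + 1 : Polynomial K) ≠ 0 := Polynomial.X_add_C_ne_zero 1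
  have hXX : (Polynomial.X * (Polynomial.X + 1) : Polynomial K) ≠ 0 :=
    mul_ne_zero Polynomial.X_ne_zero hX1
  have hbigu : ∃ N0, ∀ N, N0 ≤ N → ∀ p ∈ Polynomial.degreeLT K (N+1),
      p ∈ Jm K P Q R Set.univ N := by
    obtain ⟨N0, h⟩ := hbig 0
    exact ⟨N0, fun N hN p hp => Jm_mono_set (h N hN p hp)⟩
  have s0 : ∀ r1 r2 r3, Syz K P Q R (k+1) r1 → Syz K P Q R (k+1) r2 → Syz K P Q R (k+1) r3 →
      det3 r1 r2 r3 = 0 := by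
    intro r1 r2 r3 h1 h2 h3
    by_contra hd
    obtain ⟨p, hp, hp'⟩ := hNS
    exact hp' (regA h1 h2 h3 hd hbigu p hp)
  have s1 : ∀ s t, Syz K P Q R k s → Syz K P Q R k t → ∀ x y, s x * t y - s y * t x = 0 := by
    intro s t hs ht
    by_cases hne : (s 1 * t 2 - s 2 * t 1 = 0 ∧ s 2 * t 0 - s 0 * t 2 = 0 ∧
      s 0 * t 1 - s 1 * t 0 = 0)
    · exact cross_all hs.2 ht.2 hne.1 hne.2.1 hne.2.2
    · exfalso
      refine lemC' hP1 hP2 hQ0 hQ2 hR0 hR1 hbig hNS hσ hNI le_rfl (Nat.le_succ k) hs ht ?_ hne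
      intro r hr
      exact s0 _ _ _ (Syz_mono (Nat.le_succ k) hs) (Syz_mono (Nat.le_succ k) ht) hr
  -- constant type from vanishing Wronskian
  have wconst : ∀ h : Fin 4 → Polynomial K, ∑ i, h i = 0 → h ≠ 0 →
      (∀ x y, h x * Polynomial.derivative (h y) - h y * Polynomial.derivative (h x) = 0) →
      ∃ (v : Fin 4 → K) (H : Polynomial K), H ≠ 0 ∧ ∀ i, h i = Polynomial.C (v i) * H := by
    intro h hsum hne hw
    rw [Fin.sum_univ_four] at hsum
    have h3 : h 3 = - h 0 - h 1 - h 2 := by linear_combination hsum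
    obtain ⟨H, H0, l0, l1, l2, hl, e0, e1, e2⟩ := vecconst
      (sub_eq_zero.mp (hw 0 1)) (sub_eq_zero.mp (hw 0 2)) (sub_eq_zero.mp (hw 1 2)) (by
        rintro ⟨z0, z1, z2⟩
        apply hne
        funext i
        fin_cases i
        · exact z0
        · exact z1
        · exact z2
        · simp [h3, z0, z1, z2])
    refine ⟨![l0, l1, l2, -l0-l1-l2], H, H0, ?_⟩
    intro i
    fin_cases i
    · exact e0
    · exact e1
    · exact e2
    · simp [h3, e0, e1, e2]; ring
  have σ0 : σ ≠ 0 := by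
    rintro rfl
    exact hNI 0 1 (by decide) (by simp)
  have s2 : ¬ ∀ x y, σ x * Polynomial.derivative (σ y) - σ y * Polynomial.derivative (σ x) = 0 := by
    intro hw
    obtain ⟨v, H, _, hv⟩ := wconst σ hσ.2 σ0 hw
    exact lemR1 hσ hNI s1 v H hv
  have s3 : ∀ k', k' + 1 = k → ∀ h, Syz K P Q R k' h → h = 0 := by
    rintro k' rfl h hh
    by_contra hne
    have hw : ∀ x y, h x * Polynomial.derivative (h y) - h y * Polynomial.derivative (h x) = 0 := by
      intro x y
      have := s1 _ _ (Syz_mono (Nat.le_succ k') hh) (Syz_theta hh) x y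
      apply mul_left_cancel₀ hXX
      rw [mul_zero, ← this]; ring
    obtain ⟨v, H, H0, hv⟩ := wconst h hh.2 hne hw
    have hvj : ∃ j, v j ≠ 0 := by
      by_contra! hall
      apply hne; funext i; simp [hv, hall]
    obtain ⟨j, hj⟩ := hvj
    have hσj : ∀ i, σ i = Polynomial.C (v i) * (Polynomial.C (v j)⁻¹ * σ j) := by
      intro i
      have := s1 _ _ hσ (Syz_mono (Nat.le_succ k') hh) i j
      rw [hv i, hv j] at this
      have h2 : σ i * Polynomial.C (v j) = σ j * Polynomial.C (v i) := by
        apply mul_right_cancel₀ H0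
        linear_combination this
      have h3 : Polynomial.C (v j) * Polynomial.C (v j)⁻¹ = 1 := by
        rw [← Polynomial.C_mul, mul_inv_cancel₀ hj, Polynomial.C_1]
      linear_combination Polynomial.C (v j)⁻¹ * h2 - σ i * h3
    exact lemR1 hσ hNI s1 v _ hσj
  have s4 : ∀ h, Syz K P Q R k h → ∃ c : K, h = c • σ := by
    intro h hh
    have : ∃ j, (σ j).eval 1 ≠ 0 := by
      by_contra! hall
      exact σ0 (Wc_vanish hσ s3 hall)
    obtain ⟨j, hj⟩ := this
    refine ⟨(h j).eval 1 / (σ j).eval 1, ?_⟩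
    set c := (h j).eval 1 / (σ j).eval 1 with hc
    have hg := Syz_add hh (Syz_smul (-c) hσ)
    have := Wc_vanish hg s3 (by
      intro i
      have h1 := congrArg (Polynomial.eval 1) (s1 _ _ hh hσ i j)
      simp only [Polynomial.eval_sub, Polynomial.eval_mul, Polynomial.eval_zero,
        Polynomial.eval_add, Polynomial.eval_C] at h1 ⊢
      rw [hc]
      field_simp
      linear_combination h1)
    funext i
    have h2 := congrFun this i
    simp only [Pi.zero_apply, Polynomial.C_neg] at h2
    rw [Pi.smul_apply, Polynomial.smul_eq_C_mul]
    linear_combination h2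
  have hlt : Jm K P Q R Set.univ k < Polynomial.degreeLT K (k+1) := by
    refine lt_of_le_of_ne (Jm_le _ _) ?_
    intro he
    obtain ⟨p, hp, hp'⟩ := hNS
    exact hp' (he ▸ hp)
  have hfr := Submodule.finrank_lt_finrank_of_lt hlt
  rw [(Polynomial.degreeLTEquiv K _).finrank_eq, Module.finrank_fin_fun] at hfr
  have hr := sum_rank (fun i => Wc K k (P i) (Q i) (R i)) (k+1) (Jm K P Q R Set.univ k)
      (fun h hh => ⟨h, hh, fun i hi => absurd (Set.mem_univ i) hi, rfl⟩) σ
      (fun h hh h0 => s4 h ⟨hh, h0⟩) (Jm_le _ _)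
  rw [finrank_span_singleton σ0, Fin.sum_univ_four] at hr
  have g0 := finrank_Wc_ge (K := K) k (P 0) (Q 0) (R 0)
  have g1 := finrank_Wc_ge (K := K) k (P 1) (Q 1) (R 1)
  have g2 := finrank_Wc_ge (K := K) k (P 2) (Q 2) (R 2)
  have g3 := finrank_Wc_ge (K := K) k (P 3) (Q 3) (R 3)
  set τ : Fin 4 → Polynomial K :=
    fun i => Polynomial.X * (Polynomial.X + 1) * Polynomial.derivative (σ i) with hτdef
  have hτ : Syz K P Q R (k+1) τ := Syz_theta hσ
  have s6 : ∃ r, Syz K P Q R (k+2) r ∧ det3 σ τ r ≠ 0 := by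
    by_contra! hall
    refine lemC' hP1 hP2 hQ0 hQ2 hR0 hR1 hbig hNS hσ hNI (Nat.le_succ k) le_rfl
      (Syz_mono (Nat.le_succ k) hσ) hτ hall ?_
    rintro ⟨z0, z1, z2⟩
    apply s2
    intro x y
    have := cross_all hσ.2 hτ.2 z0 z1 z2 x y
    apply mul_left_cancel₀ hXX
    rw [mul_zero, ← this]; simp only [hτdef]; ring
  obtain ⟨ρ, hρ, hdet⟩ := s6
  have s7 := regA (Syz_mono (by omega) hσ) (Syz_mono (by omega) hτ) hρ hdet hbigu
  have hsum : P 0 + Q 1 + R 2 + (P 3 + Q 3 + R 3) = 3 * k + 3 := by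
    have sσ : σ 3 = - σ 0 - σ 1 - σ 2 := by
      have := hσ.2; rw [Fin.sum_univ_four] at this; linear_combination this
    have sτ : τ 3 = - τ 0 - τ 1 - τ 2 := by
      have := hτ.2; rw [Fin.sum_univ_four] at this; linear_combination this
    have sρ : ρ 3 = - ρ 0 - ρ 1 - ρ 2 := by
      have := hρ.2; rw [Fin.sum_univ_four] at this; linear_combination this
    -- permuted determinants
    have wt : ∀ (u : Fin 4 → Polynomial K) (e : ℕ) (j : Fin 4), Syz K P Q R e u →
        u j ∈ Wc K e 0 0 0 := by
      intro u e j hu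
      have h := Wc_le (hu.1 j)
      exact ⟨by simp, by simp, by simpa using h⟩
    have w : ∀ i j : Fin 4,
        (σ i * τ 3 - σ 3 * τ i) * ρ j + (σ 3 * τ j - σ j * τ 3) * ρ i
          + (σ j * τ i - σ i * τ j) * ρ 3 ∈ Wc K (3 * k + 3) (P i + P 3) (Q i + Q 3) (R i + R 3) := by
      intro i j
      have t1 : ∀ (e1 e2 e3 : ℕ) (u1 u2 u3 : Fin 4 → Polynomial K), Syz K P Q R e1 u1 →
          Syz K P Q R e2 u2 → Syz K P Q R e3 u3 → e1 + e2 + e3 = 3 * k + 3 →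
          u1 i * u2 3 * u3 j ∈ Wc K (3 * k + 3) (P i + P 3) (Q i + Q 3) (R i + R 3) := by
        intro e1 e2 e3 u1 u2 u3 h1 h2 h3 he
        have := Wc_mul (Wc_mul (h1.1 i) (h2.1 3)) (wt u3 e3 j h3)
        rwa [he] at this
      have a1 := t1 _ _ _ σ τ ρ hσ hτ hρ (by omega)
      have a2 := t1 _ _ _ τ σ ρ hτ hσ hρ (by omega)
      have a3 := t1 _ _ _ ρ σ τ hρ hσ hτ (by omega)
      have a4 := t1 _ _ _ ρ τ σ hρ hτ hσ (by omega)
      have a5 := t1 _ _ _ τ ρ σ hτ hρ hσ (by omega)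
      have a6 := t1 _ _ _ σ ρ τ hσ hρ hτ (by omega)
      have := Submodule.add_mem _ (Submodule.add_mem _ (Submodule.sub_mem _ a1 a2)
        (Submodule.sub_mem _ a3 a4)) (Submodule.sub_mem _ a5 a6)
      convert this using 1
      ring
    have w0 : det3 σ τ ρ ∈ Wc K (3 * k + 3) (P 0 + P 3) (Q 0 + Q 3) (R 0 + R 3) := by
      have h := w 0 1
      convert h using 1
      rw [det3, sσ, sτ, sρ]; ring
    have w1 : det3 σ τ ρ ∈ Wc K (3 * k + 3) (P 1 + P 3) (Q 1 + Q 3) (R 1 + R 3) := by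
      have h := w 1 2
      convert h using 1
      rw [det3, sσ, sτ, sρ]; ring
    have w2 : det3 σ τ ρ ∈ Wc K (3 * k + 3) (P 2 + P 3) (Q 2 + Q 3) (R 2 + R 3) := by
      have h := w 2 0
      convert h using 1
      rw [det3, sσ, sτ, sρ]; ring
    have := final_bound hdet w0 w1 w2
    omega
  exact ⟨hsum, s4, by omega, s7⟩

end Core4


section Big
variable {K : Type*} [Field K]

theorem dLT_mono {m n : ℕ} (h : m ≤ n) {p : Polynomial K} (hp : p ∈ Polynomial.degreeLT K m) :
    p ∈ Polynomial.degreeLT K n := Polynomial.degreeLT_mono h hp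

theorem X1_monic (c : ℕ) : ((Polynomial.X + 1 : Polynomial K) ^ c).Monic :=
  (Polynomial.monic_X_add_C (1:K)).pow c

theorem X1_deg (c : ℕ) : ((Polynomial.X + 1 : Polynomial K) ^ c).natDegree = c := by
  have : (Polynomial.X + 1 : Polynomial K) = Polynomial.X + Polynomial.C 1 := by simp
  rw [this, Polynomial.natDegree_pow, Polynomial.natDegree_X_add_C, mul_one]

theorem mod_mem {g : Polynomial K} (hg : g.Monic) (p : Polynomial K) :
    p %ₘ g ∈ Polynomial.degreeLT K g.natDegree := by
  rw [Polynomial.mem_degreeLT, ← Polynomial.degree_eq_natDegree hg.ne_zero]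
  exact Polynomial.degree_modByMonic_lt p hg

theorem hbig_spec (a b c α β γ : ℕ) : ∀ m, ∃ N0, ∀ N, N0 ≤ N →
    ∀ p ∈ Polynomial.degreeLT K (N+1),
      p ∈ Jm K ![a,0,0,α] ![0,b,0,β] ![0,0,c,γ] {x | x ≠ m} N := by
  have h01 : ∀ N, a + b + c ≤ N → ∀ p ∈ Polynomial.degreeLT K (N+1), ∃ h0 h1 : Polynomial K,
      h0 ∈ Wc K N a 0 0 ∧ h1 ∈ Wc K N 0 b 0 ∧ h0 + h1 = p := by
    intro N hN p hp
    have hr := mod_mem (Polynomial.monic_X_pow (R := K) a) p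
    rw [Polynomial.natDegree_X_pow] at hr
    have he := Polynomial.modByMonic_add_div p (Polynomial.X ^ a)
    refine ⟨Polynomial.X ^ a * (p /ₘ Polynomial.X ^ a), p %ₘ Polynomial.X ^ a, ⟨⟨_, rfl⟩, by simp, ?_⟩,
      ⟨by simp, by simp, dLT_mono (by omega) hr⟩, by rw [add_comm]; exact he⟩
    rw [← eq_sub_iff_add_eq'] at he
    rw [he]
    exact Submodule.sub_mem _ hp (dLT_mono (by omega) hr)
  have h21 : ∀ N, a + b + c ≤ N → ∀ p ∈ Polynomial.degreeLT K (N+1), ∃ h0 h1 : Polynomial K,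
      h0 ∈ Wc K N 0 0 c ∧ h1 ∈ Wc K N 0 b 0 ∧ h0 + h1 = p := by
    intro N hN p hp
    have hr := mod_mem (X1_monic (K := K) c) p
    rw [X1_deg] at hr
    have he := Polynomial.modByMonic_add_div p ((Polynomial.X + 1) ^ c)
    refine ⟨(Polynomial.X + 1) ^ c * (p /ₘ (Polynomial.X + 1) ^ c), p %ₘ (Polynomial.X + 1) ^ c,
      ⟨by simp, ⟨_, rfl⟩, ?_⟩,
      ⟨by simp, by simp, dLT_mono (by omega) hr⟩, by rw [add_comm]; exact he⟩
    rw [← eq_sub_iff_add_eq'] at he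
    rw [he]
    exact Submodule.sub_mem _ hp (dLT_mono (by omega) hr)
  have h02 : ∀ N, a + b + c ≤ N → ∀ p ∈ Polynomial.degreeLT K (N+1), ∃ h0 h1 : Polynomial K,
      h0 ∈ Wc K N a 0 0 ∧ h1 ∈ Wc K N 0 0 c ∧ h0 + h1 = p := by
    intro N hN p hp
    have hc : IsCoprime (Polynomial.X ^ a : Polynomial K) ((Polynomial.X + 1) ^ c) := by
      apply IsCoprime.pow
      exact ⟨-1, 1, by ring⟩
    obtain ⟨u, v, huv⟩ := hc
    set r := (p * u) %ₘ (Polynomial.X + 1) ^ c with hrd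
    have hr : r ∈ Polynomial.degreeLT K c := by
      have hr := mod_mem (X1_monic (K := K) c) (p * u)
      rwa [X1_deg] at hr
    have he := Polynomial.modByMonic_add_div (p * u) ((Polynomial.X + 1) ^ c)
    rw [← hrd] at he
    have h1 : Polynomial.X ^ a * r ∈ Polynomial.degreeLT K (N+1) := by
      rw [mem_dLT_iff] at hr ⊢
      intro h0
      have hr0 : r ≠ 0 := right_ne_zero_of_mul h0
      rw [Polynomial.natDegree_mul (pow_ne_zero _ Polynomial.X_ne_zero) hr0,
        Polynomial.natDegree_X_pow]
      have := hr hr0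
      omega
    refine ⟨Polynomial.X ^ a * r, p - Polynomial.X ^ a * r, ⟨⟨_, rfl⟩, by simp, h1⟩,
      ⟨by simp, ⟨p * v + Polynomial.X ^ a * ((p * u) /ₘ (Polynomial.X + 1) ^ c), ?_⟩,
        Submodule.sub_mem _ hp h1⟩, by ring⟩
    linear_combination (-p) * huv + (-Polynomial.X ^ a) * he
  have z : ∀ N x y z, (0 : Polynomial K) ∈ Wc K N x y z := fun N x y z => Submodule.zero_mem _
  intro m
  refine ⟨a + b + c, fun N hN p hp => ?_⟩
  obtain ⟨u0, u1, hu0, hu1, hu⟩ := h01 N hN p hp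
  obtain ⟨v0, v1, hv0, hv1, hv⟩ := h21 N hN p hp
  obtain ⟨w0, w1, hw0, hw1, hw⟩ := h02 N hN p hp
  fin_cases m
  · refine ⟨![0, v1, v0, 0], ?_, ?_, ?_⟩
    · intro i; fin_cases i
      · exact z ..
      · exact hv1
      · exact hv0
      · exact z ..
    · intro i hi; simp at hi; subst hi; rfl
    · rw [Fin.sum_univ_four, ← hv]; simp [add_comm]
  · refine ⟨![w0, 0, w1, 0], ?_, ?_, ?_⟩
    · intro i; fin_cases i
      · exact hw0
      · exact z ..
      · exact hw1
      · exact z ..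
    · intro i hi; simp at hi; subst hi; rfl
    · rw [Fin.sum_univ_four, ← hw]; simp
  all_goals
    refine ⟨![u0, u1, 0, 0], ?_, ?_, ?_⟩
    · intro i; fin_cases i
      · exact hu0
      · exact hu1
      · exact z ..
      · exact z ..
    · intro i hi; simp at hi; subst hi; rfl
    · rw [Fin.sum_univ_four, ← hu]; simp

end Big


section Bridge
variable {K : Type*} [Field K]

theorem hc_left {d : ℕ} {m : MvPolynomial (Fin 3) K} (hm : m.IsHomogeneous d) (k : ℕ)
    (f : MvPolynomial (Fin 3) K) :
    homogeneousComponent (d + k) (m * f) = m * homogeneousComponent k f := by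
  letI := MvPolynomial.gradedAlgebra (R := K) (σ := Fin 3)
  have h := DirectSum.coe_decompose_mul_add_of_left_mem (homogeneousSubmodule (Fin 3) K)
    (i := d) (j := k) (b := f) hm
  have e : ∀ (g : MvPolynomial (Fin 3) K) (i : ℕ),
      (DirectSum.decompose (homogeneousSubmodule (Fin 3) K) g i : MvPolynomial (Fin 3) K)
        = homogeneousComponent i g := fun g i => decomposition.decompose'_apply g i
  rw [e, e] at h
  exact h

theorem hc_left_lt {d : ℕ} {m : MvPolynomial (Fin 3) K} (hm : m.IsHomogeneous d) {k : ℕ}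
    (hk : k < d) (f : MvPolynomial (Fin 3) K) :
    homogeneousComponent k (m * f) = 0 := by
  letI := MvPolynomial.gradedAlgebra (R := K) (σ := Fin 3)
  have h := DirectSum.coe_decompose_mul_of_left_mem_of_not_le (homogeneousSubmodule (Fin 3) K)
    (i := d) (n := k) (b := f) hm (by omega)
  have e : ∀ (g : MvPolynomial (Fin 3) K) (i : ℕ),
      (DirectSum.decompose (homogeneousSubmodule (Fin 3) K) g i : MvPolynomial (Fin 3) K)
        = homogeneousComponent i g := fun g i => decomposition.decompose'_apply g i
  rw [e] at h
  exact h

/-- quotient of homogeneous by homogeneous -/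
theorem hom_dvd {d k : ℕ} {m G : MvPolynomial (Fin 3) K} (hm : m.IsHomogeneous d)
    (hG : G.IsHomogeneous k) (h : m ∣ G) :
    G = 0 ∨ (d ≤ k ∧ ∃ f, f.IsHomogeneous (k - d) ∧ G = m * f) := by
  obtain ⟨f, rfl⟩ := h
  have h1 := homogeneousComponent_eq_self hG
  by_cases hk : k < d
  · left; rw [← h1, hc_left_lt hm hk]
  · right
    refine ⟨by omega, homogeneousComponent (k - d) f, homogeneousComponent_isHomogeneous _ _, ?_⟩
    have h2 := hc_left hm (k - d) f
    rw [show d + (k - d) = k by omega, h1] at h2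
    exact h2

theorem dvd_hc {d : ℕ} {m G : MvPolynomial (Fin 3) K} (hm : m.IsHomogeneous d) (k : ℕ)
    (h : m ∣ G) : m ∣ homogeneousComponent k G := by
  obtain ⟨f, rfl⟩ := h
  by_cases hk : k < d
  · rw [hc_left_lt hm hk]; exact dvd_zero _
  · have h2 := hc_left hm (k - d) f
    rw [show d + (k - d) = k by omega] at h2
    rw [h2]; exact dvd_mul_right _ _

/-- the linear form -/
noncomputable def LL (K : Type*) [Field K] : MvPolynomial (Fin 3) K := X 0 + X 1 + X 2

theorem LL_hom : (LL K).IsHomogeneous 1 :=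
  ((isHomogeneous_X K 0).add (isHomogeneous_X K 1)).add (isHomogeneous_X K 2)

theorem LL_ne : LL K ≠ 0 := by
  intro h
  have := congrArg (eval ![1,0,0]) h
  simp [LL] at this

noncomputable def phi (K : Type*) [Field K] : MvPolynomial (Fin 3) K →ₐ[K] Polynomial K :=
  aeval ![Polynomial.X, 1, -(Polynomial.X + 1)]

theorem phi_X0 : phi K (X 0) = Polynomial.X := by simp [phi]
theorem phi_X1 : phi K (X 1) = 1 := by simp [phi]
theorem phi_X2 : phi K (X 2) = -(Polynomial.X + 1) := by simp [phi]
theorem phi_LL : phi K (LL K) = 0 := by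
  rw [LL, map_add, map_add, phi_X0, phi_X1, phi_X2]; ring

theorem phi_deg {k : ℕ} {F : MvPolynomial (Fin 3) K} (hF : F.IsHomogeneous k) :
    (phi K F).natDegree ≤ k := by
  have := MvPolynomial.aeval_natDegree_le F hF.totalDegree_le
    ![Polynomial.X, 1, -(Polynomial.X + 1)] (n := 1) (by
      intro i
      fin_cases i
      · simp
      · simp
      · simp only [Fin.reduceFinMk, Matrix.cons_val, Polynomial.natDegree_neg]
        exact le_of_eq (Polynomial.natDegree_X_add_C (1:K)))
  simpa [phi] using this

theorem phi_dLT {k : ℕ} {F : MvPolynomial (Fin 3) K} (hF : F.IsHomogeneous k) :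
    phi K F ∈ Polynomial.degreeLT K (k+1) := by
  rw [mem_dLT_iff]; intro _; have := phi_deg hF; omega

theorem phi_lift {k : ℕ} {u : Polynomial K} (hu : u.natDegree ≤ k) :
    ∃ F : MvPolynomial (Fin 3) K, F.IsHomogeneous k ∧ phi K F = u := by
  refine ⟨∑ i ∈ Finset.range (k+1), C (u.coeff i) * (X 0 ^ i * X 1 ^ (k - i)), ?_, ?_⟩
  · refine IsHomogeneous.sum _ _ _ (fun i hi => ?_)
    have h := ((isHomogeneous_X_pow (R := K) (0 : Fin 3) i).mul
      (isHomogeneous_X_pow (R := K) (1 : Fin 3) (k - i))).C_mul (u.coeff i)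
    rw [Finset.mem_range] at hi
    rwa [show i + (k - i) = k by omega] at h
  · rw [map_sum, Polynomial.as_sum_range_C_mul_X_pow' (p := u) (n := k+1) (by omega)]
    apply Finset.sum_congr rfl
    intro i hi
    rw [map_mul, map_mul, map_pow, map_pow, phi_X0, phi_X1, one_pow, mul_one]
    congr 1
    rw [← Polynomial.as_sum_range_C_mul_X_pow' (p := u) (n := k+1) (by omega)]
    simp [phi]

/-- elimination of the last variable -/
noncomputable def psi (K : Type*) [Field K] :
    MvPolynomial (Fin 3) K →ₐ[K] MvPolynomial (Fin 3) K :=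
  aeval ![X 0, X 1, -(X 0 + X 1)]

theorem LL_dvd_psi (F : MvPolynomial (Fin 3) K) : LL K ∣ F - psi K F := by
  induction F using MvPolynomial.induction_on with
  | C a => simp [psi]
  | add p q hp hq =>
    rw [map_add, show p + q - (psi K p + psi K q) = (p - psi K p) + (q - psi K q) by ring]
    exact dvd_add hp hq
  | mul_X p i hp =>
    rw [map_mul, show p * X i - psi K p * psi K (X i)
      = (p - psi K p) * X i + psi K p * (X i - psi K (X i)) by ring]
    refine dvd_add (dvd_mul_of_dvd_left hp _) (dvd_mul_of_dvd_right ?_ _)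
    fin_cases i
    · simp [psi]
    · simp [psi]
    · simp [psi, LL]; exact ⟨1, by ring⟩

theorem eval_scale {k : ℕ} {F : MvPolynomial (Fin 3) K} (hF : F.IsHomogeneous k) (v : K)
    (x : Fin 3 → K) : eval (fun i => v * x i) F = v ^ k * eval x F := by
  rw [eval_eq, eval_eq, Finset.mul_sum]
  apply Finset.sum_congr rfl
  intro d hd
  have : d.degree = k := by
    have := hF (mem_support_iff.mp hd)
    rw [← this, Finsupp.degree_eq_weight_one]; rfl
  simp_rw [mul_pow]
  rw [Finset.prod_mul_distrib, Finset.prod_pow_eq_pow_sum]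
  rw [Finsupp.degree_apply] at this
  rw [this]; ring

theorem psi_hom {k : ℕ} {F : MvPolynomial (Fin 3) K} (hF : F.IsHomogeneous k) :
    (psi K F).IsHomogeneous k := by
  have := hF.aeval (![X 0, X 1, -(X 0 + X 1)] : Fin 3 → MvPolynomial (Fin 3) K) (n := 1) (by
    intro i
    fin_cases i
    · exact isHomogeneous_X K 0
    · exact isHomogeneous_X K 1
    · exact ((isHomogeneous_X K 0).add (isHomogeneous_X K 1)).neg)
  simpa [psi] using this

theorem phi_ker [CharZero K] {k : ℕ} {F : MvPolynomial (Fin 3) K} (hF : F.IsHomogeneous k)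
    (h0 : phi K F = 0) : LL K ∣ F := by
  have h1 : psi K F = 0 := by
    have hz : X 1 * psi K F = 0 := by
      apply MvPolynomial.funext
      intro x
      rw [map_mul, eval_X, map_zero]
      by_cases hx : x 1 = 0
      · rw [hx, zero_mul]
      · have e1 : eval x (psi K F) = eval (fun i => x 1 * (![x 0 / x 1, 1, -(x 0 / x 1 + 1)] : Fin 3 → K) i) F := by
          have : (eval x).comp (psi K).toRingHom =
              eval (fun i => x 1 * (![x 0 / x 1, 1, -(x 0 / x 1 + 1)] : Fin 3 → K) i) := by
            apply MvPolynomial.ringHom_ext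
            · intro r; simp [psi]
            · intro i
              fin_cases i
              · simp [psi]; field_simp
              · simp [psi]
              · simp [psi]; field_simp
                try ring
          exact congrArg (fun f => f F) this
        have e2 : eval ![x 0 / x 1, 1, -(x 0 / x 1 + 1)] F = (phi K F).eval (x 0 / x 1) := by
          have : (Polynomial.evalRingHom (x 0 / x 1)).comp (phi K).toRingHom =
              eval ![x 0 / x 1, 1, -(x 0 / x 1 + 1)] := by
            apply MvPolynomial.ringHom_ext
            · intro r; simp [phi]
            · intro i
              fin_cases i <;> simp [phi]
          exact (congrArg (fun f => f F) this).symm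
        rw [e1, eval_scale hF, e2, h0]; simp
    exact (mul_eq_zero.mp hz).resolve_left (X_ne_zero 1)
  have := LL_dvd_psi F
  rwa [h1, sub_zero] at this

/-- monomials -/
noncomputable def Mo (K : Type*) [Field K] (p q r : ℕ) : MvPolynomial (Fin 3) K :=
  X 0 ^ p * X 1 ^ q * X 2 ^ r

theorem Mo_hom (p q r : ℕ) : (Mo K p q r).IsHomogeneous (p + q + r) :=
  ((isHomogeneous_X_pow _ _).mul (isHomogeneous_X_pow _ _)).mul (isHomogeneous_X_pow _ _)

theorem Mo_dvd_iff {p q r : ℕ} {f : MvPolynomial (Fin 3) K} :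
    Mo K p q r ∣ f ↔ X 0 ^ p ∣ f ∧ X 1 ^ q ∣ f ∧ X 2 ^ r ∣ f := by
  constructor
  · intro h
    exact ⟨(Dvd.intro _ (by rw [Mo]; ring : X 0 ^ p * (X 1 ^ q * X 2 ^ r) = Mo K p q r)).trans h,
      (Dvd.intro _ (by rw [Mo]; ring : X 1 ^ q * (X 0 ^ p * X 2 ^ r) = Mo K p q r)).trans h,
      (Dvd.intro _ (by rw [Mo]; ring : X 2 ^ r * (X 0 ^ p * X 1 ^ q) = Mo K p q r)).trans h⟩
  · rintro ⟨⟨f, rfl⟩, h1, h2⟩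
    have n01 : ¬ (X 1 : MvPolynomial (Fin 3) K) ∣ X 0 ^ p := by
      intro h; have := X_prime.dvd_of_dvd_pow h; rw [X_dvd_X] at this; simp at this
    have n02 : ¬ (X 2 : MvPolynomial (Fin 3) K) ∣ X 0 ^ p := by
      intro h; have := X_prime.dvd_of_dvd_pow h; rw [X_dvd_X] at this; simp at this
    have n12 : ¬ (X 2 : MvPolynomial (Fin 3) K) ∣ X 1 ^ q := by
      intro h; have := X_prime.dvd_of_dvd_pow h; rw [X_dvd_X] at this; simp at this
    obtain ⟨f, rfl⟩ := X_prime.pow_dvd_of_dvd_mul_left q n01 h1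
    have h3 := X_prime.pow_dvd_of_dvd_mul_left r n02 h2
    obtain ⟨f, rfl⟩ := X_prime.pow_dvd_of_dvd_mul_left r n12 h3
    exact ⟨f, by rw [Mo]; ring⟩

theorem Mo_dvd_LL {p q r : ℕ} {f : MvPolynomial (Fin 3) K} (h : Mo K p q r ∣ LL K * f) :
    Mo K p q r ∣ f := by
  have n0 : ¬ (X 0 : MvPolynomial (Fin 3) K) ∣ LL K := by
    rintro ⟨g, hg⟩
    have := congrArg (eval ![0,1,0]) hg
    simp [LL] at this
  have n1 : ¬ (X 1 : MvPolynomial (Fin 3) K) ∣ LL K := by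
    rintro ⟨g, hg⟩
    have := congrArg (eval ![1,0,0]) hg
    simp [LL] at this
  have n2 : ¬ (X 2 : MvPolynomial (Fin 3) K) ∣ LL K := by
    rintro ⟨g, hg⟩
    have := congrArg (eval ![1,0,0]) hg
    simp [LL] at this
  rw [Mo_dvd_iff] at h ⊢
  exact ⟨X_prime.pow_dvd_of_dvd_mul_left _ n0 h.1, X_prime.pow_dvd_of_dvd_mul_left _ n1 h.2.1,
    X_prime.pow_dvd_of_dvd_mul_left _ n2 h.2.2⟩

theorem phi_Mo (p q r : ℕ) : phi K (Mo K p q r) =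
    Polynomial.C ((-1)^r) * (Polynomial.X ^ p * (Polynomial.X + 1) ^ r) := by
  rw [Mo, map_mul, map_mul, map_pow, map_pow, map_pow, phi_X0, phi_X1, phi_X2, neg_pow]
  simp; ring

theorem phi_Wc {k p q r : ℕ} {G : MvPolynomial (Fin 3) K} (hG : G.IsHomogeneous k)
    (hd : Mo K p q r ∣ G) : phi K G ∈ Wc K k p q r := by
  rcases hom_dvd (Mo_hom p q r) hG hd with rfl | ⟨hk, f, hf, rfl⟩
  · rw [map_zero]; exact Submodule.zero_mem _
  · by_cases h0 : phi K (Mo K p q r * f) = 0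
    · rw [h0]; exact Submodule.zero_mem _
    rw [mem_Wc' h0]
    rw [map_mul, phi_Mo] at *
    have hf0 := right_ne_zero_of_mul h0
    refine ⟨⟨Polynomial.C ((-1)^r) * (Polynomial.X + 1) ^ r * phi K f, by ring⟩,
      ⟨Polynomial.C ((-1)^r) * Polynomial.X ^ p * phi K f, by ring⟩, ?_⟩
    have hdf := phi_deg hf
    have : (Polynomial.C ((-1 : K)^r) * (Polynomial.X ^ p * (Polynomial.X + 1) ^ r) * phi K f).natDegree
        ≤ 0 + (p + r) + (phi K f).natDegree := by
      refine Polynomial.natDegree_mul_le.trans (Nat.add_le_add_right ?_ _)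
      refine Polynomial.natDegree_mul_le.trans ?_
      rw [Polynomial.natDegree_C]
      refine Nat.add_le_add_left ?_ _
      refine Polynomial.natDegree_mul_le.trans ?_
      rw [Polynomial.natDegree_X_pow, X1_deg]
    omega

theorem Wc_lift {k p q r : ℕ} {h : Polynomial K} (hh : h ∈ Wc K k p q r) :
    ∃ G : MvPolynomial (Fin 3) K, G.IsHomogeneous k ∧ Mo K p q r ∣ G ∧ phi K G = h := by
  obtain ⟨u, hu, h0 | ⟨hk, hd⟩⟩ := Wc_factor hh
  · exact ⟨0, isHomogeneous_zero _ _ _, dvd_zero _, by simp [h0]⟩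
  · obtain ⟨F, hF, hFu⟩ := phi_lift hd
    refine ⟨Mo K p q r * (C ((-1)^r) * F), ?_, dvd_mul_right _ _, ?_⟩
    · have := (Mo_hom (K := K) p q r).mul (hF.C_mul ((-1)^r))
      rwa [show p + q + r + (k - (p + q + r)) = k by omega] at this
    · rw [map_mul, map_mul, phi_Mo, hFu, hu]
      have : phi K (C ((-1)^r)) = Polynomial.C ((-1)^r) := by simp [phi]
      rw [this]
      have h2 : Polynomial.C ((-1 : K)^r) * Polynomial.C ((-1 : K)^r) = 1 := by
        rw [← Polynomial.C_mul, ← mul_pow]; simp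
      linear_combination (Polynomial.X ^ p * (Polynomial.X + 1) ^ r) * u * h2

theorem Wc_inter {k p q r p' q' r' : ℕ} {h : Polynomial K} (h1 : h ∈ Wc K k p q r)
    (h2 : h ∈ Wc K k p' q' r') : h ∈ Wc K k (max p p') (max q q') (max r r') := by
  refine ⟨?_, ?_, ?_⟩
  · rcases max_choice p p' with e | e <;> rw [e]
    · exact h1.1
    · exact h2.1
  · rcases max_choice r r' with e | e <;> rw [e]
    · exact h1.2.1
    · exact h2.2.1
  · rcases max_choice q q' with e | e <;> rw [e]
    · exact h1.2.2
    · exact h2.2.2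

theorem Mo_dvd_Mo {p q r p' q' r' : ℕ} (hp : p ≤ p') (hq : q ≤ q') (hr : r ≤ r') :
    Mo K p q r ∣ Mo K p' q' r' :=
  mul_dvd_mul (mul_dvd_mul (pow_dvd_pow _ hp) (pow_dvd_pow _ hq)) (pow_dvd_pow _ hr)

end Bridge


section Ide
variable {K : Type*} [Field K] {P Q R : Fin 4 → ℕ}

/-- the monomial ideal -/
noncomputable def II (K : Type*) [Field K] (P Q R : Fin 4 → ℕ) : Ideal (MvPolynomial (Fin 3) K) :=
  Ideal.span (Set.range fun i => Mo K (P i) (Q i) (R i))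

theorem II_of_dvd {i : Fin 4} {f : MvPolynomial (Fin 3) K} (h : Mo K (P i) (Q i) (R i) ∣ f) :
    f ∈ II K P Q R :=
  Ideal.mem_of_dvd _ h (Ideal.subset_span ⟨i, rfl⟩)

def Dec (K : Type*) [Field K] (P Q R : Fin 4 → ℕ) (k : ℕ)
    (H : Fin 4 → MvPolynomial (Fin 3) K) : Prop :=
  ∀ i, (H i).IsHomogeneous k ∧ Mo K (P i) (Q i) (R i) ∣ H i

theorem II_dec {k : ℕ} {G : MvPolynomial (Fin 3) K} (hG : G.IsHomogeneous k)
    (hI : G ∈ II K P Q R) : ∃ H, Dec K P Q R k H ∧ ∑ i, H i = G := by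
  obtain ⟨c, hc⟩ := (Ideal.mem_span_range_iff_exists_fun).mp hI
  refine ⟨fun i => homogeneousComponent k (c i * Mo K (P i) (Q i) (R i)), fun i =>
    ⟨homogeneousComponent_isHomogeneous _ _, dvd_hc (Mo_hom _ _ _) k (dvd_mul_left _ _)⟩, ?_⟩
  rw [← map_sum, hc, homogeneousComponent_eq_self hG]

theorem dec_sum {k : ℕ} {H : Fin 4 → MvPolynomial (Fin 3) K} (h : Dec K P Q R k H) :
    (∑ i, H i) ∈ II K P Q R ∧ (∑ i, H i).IsHomogeneous k :=
  ⟨Ideal.sum_mem _ (fun i _ => II_of_dvd (h i).2), IsHomogeneous.sum _ _ _ (fun i _ => (h i).1)⟩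

theorem surj_of_Jm [CharZero K] {k : ℕ} {g : MvPolynomial (Fin 3) K} (hg : g.IsHomogeneous (k+1))
    (hJ : phi K g ∈ Jm K P Q R Set.univ (k+1)) :
    ∃ f : MvPolynomial (Fin 3) K, f.IsHomogeneous k ∧ g - LL K * f ∈ II K P Q R := by
  obtain ⟨h, h1, -, h2⟩ := hJ
  choose H hH1 hH2 hH3 using fun i => Wc_lift (h1 i)
  have hs := dec_sum (P := P) (Q := Q) (R := R) (fun i => ⟨hH1 i, hH2 i⟩)
  have h0 : phi K (g - ∑ i, H i) = 0 := by
    rw [map_sub, map_sum, ← h2, sub_eq_zero]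
    exact Finset.sum_congr rfl (fun i _ => (hH3 i).symm)
  have hh := hg.sub hs.2
  rcases hom_dvd LL_hom hh (phi_ker hh h0) with hz | ⟨-, f, hf, he⟩
  · refine ⟨0, isHomogeneous_zero _ _ _, ?_⟩
    rw [mul_zero, sub_zero, sub_eq_zero.mp hz]; exact hs.1
  · refine ⟨f, by simpa using hf, ?_⟩
    rw [show g - LL K * f = ∑ i, H i by rw [← he]; ring]
    exact hs.1

theorem pair_mem [CharZero K] {k : ℕ} {H : Fin 4 → MvPolynomial (Fin 3) K}
    (h : Dec K P Q R k H) {i j : Fin 4} (h0 : phi K (H i) + phi K (H j) = 0) :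
    ∃ e ∈ II K P Q R, H i + H j = LL K * e := by
  have w1 := phi_Wc (h i).1 (h i).2
  have w2 : phi K (H i) ∈ Wc K k (P j) (Q j) (R j) := by
    rw [eq_neg_of_add_eq_zero_left h0]
    exact Submodule.neg_mem _ (phi_Wc (h j).1 (h j).2)
  obtain ⟨T, hT, hd, hp⟩ := Wc_lift (Wc_inter w1 w2)
  have d1 : Mo K (P i) (Q i) (R i) ∣ T :=
    (Mo_dvd_Mo (le_max_left _ _) (le_max_left _ _) (le_max_left _ _)).trans hd
  have d2 : Mo K (P j) (Q j) (R j) ∣ T :=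
    (Mo_dvd_Mo (le_max_right _ _) (le_max_right _ _) (le_max_right _ _)).trans hd
  obtain ⟨u, hu⟩ := phi_ker ((h i).1.sub hT) (by rw [map_sub, hp, sub_self])
  obtain ⟨v, hv⟩ := phi_ker ((h j).1.add hT) (by rw [map_add, hp, add_comm, h0])
  have e1 : Mo K (P i) (Q i) (R i) ∣ u := Mo_dvd_LL (by rw [← hu]; exact dvd_sub (h i).2 d1)
  have e2 : Mo K (P j) (Q j) (R j) ∣ v := Mo_dvd_LL (by rw [← hv]; exact dvd_add (h j).2 d2)
  exact ⟨u + v, Ideal.add_mem _ (II_of_dvd e1) (II_of_dvd e2), by linear_combination hu + hv⟩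

theorem four_split : ∀ i j : Fin 4, i ≠ j → ∃ l m : Fin 4, i ∉ ({j, l, m} : Finset (Fin 4)) ∧
    j ∉ ({l, m} : Finset (Fin 4)) ∧ l ∉ ({m} : Finset (Fin 4)) ∧ Finset.univ = {i, j, l, m} := by
  decide

theorem inj_of_pair [CharZero K] {k : ℕ} {H : Fin 4 → MvPolynomial (Fin 3) K}
    (h : Dec K P Q R k H) {f : MvPolynomial (Fin 3) K} (hs : ∑ i, H i = LL K * f)
    {i j : Fin 4} (hij : i ≠ j) (h0 : phi K (H i) + phi K (H j) = 0) : f ∈ II K P Q R := by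
  obtain ⟨l, m, h1, h2, h3, h4⟩ := four_split i j hij
  have hsum : ∀ {A : Type _} [AddCommMonoid A] (F : Fin 4 → A), ∑ x, F x = F i + (F j + (F l + F m)) := by
    intro A _ F
    rw [h4, Finset.sum_insert h1, Finset.sum_insert h2, Finset.sum_insert h3, Finset.sum_singleton]
  have h5 : phi K (H l) + phi K (H m) = 0 := by
    have := congrArg (phi K) hs
    rw [map_mul, phi_LL, zero_mul, hsum, map_add, map_add, map_add] at this
    linear_combination this - h0
  obtain ⟨e1, he1, hh1⟩ := pair_mem h h0
  obtain ⟨e2, he2, hh2⟩ := pair_mem h h5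
  have : f = e1 + e2 := by
    apply mul_left_cancel₀ (LL_ne (K := K))
    rw [← hs, hsum]
    linear_combination hh1 + hh2
  rw [this]; exact Ideal.add_mem _ he1 he2

theorem dec_syz {k : ℕ} {H : Fin 4 → MvPolynomial (Fin 3) K}
    (h : Dec K P Q R k H) {f : MvPolynomial (Fin 3) K} (hs : ∑ i, H i = LL K * f) :
    Syz K P Q R k (fun i => phi K (H i)) := by
  refine ⟨fun i => phi_Wc (h i).1 (h i).2, ?_⟩
  have := congrArg (phi K) hs
  rwa [map_mul, phi_LL, zero_mul, map_sum] at this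

/-- surjectivity of multiplication by `y` in degree `k` -/
def Sj (I : Ideal (MvPolynomial (Fin 3) K)) (y : MvPolynomial (Fin 3) K) (k : ℕ) : Prop :=
  ∀ g : MvPolynomial (Fin 3) K, g.IsHomogeneous (k + 1) →
      ∃ f : MvPolynomial (Fin 3) K, f.IsHomogeneous k ∧ g - y * f ∈ I

theorem stepL [CharZero K] (hP1 : P 1 = 0) (hP2 : P 2 = 0) (hQ0 : Q 0 = 0) (hQ2 : Q 2 = 0)
    (hR0 : R 0 = 0) (hR1 : R 1 = 0)
    (hbig : ∀ m, ∃ N0, ∀ N, N0 ≤ N → ∀ p ∈ Polynomial.degreeLT K (N+1),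
      p ∈ Jm K P Q R {x | x ≠ m} N) {k : ℕ} {f0 : MvPolynomial (Fin 3) K}
    (hf0 : f0.IsHomogeneous k) (hf0I : f0 ∉ II K P Q R) (hLf0 : LL K * f0 ∈ II K P Q R)
    (hns : ¬ Sj (II K P Q R) (LL K) k) :
    P 0 + Q 1 + R 2 + (P 3 + Q 3 + R 3) = 3 * k + 6 ∧
    (∀ f : MvPolynomial (Fin 3) K, f.IsHomogeneous k → LL K * f ∈ II K P Q R →
      ∃ c : K, f - c • f0 ∈ II K P Q R) ∧
    (∃ g0 : MvPolynomial (Fin 3) K, g0.IsHomogeneous (k+1) ∧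
      (¬ ∃ f : MvPolynomial (Fin 3) K, f.IsHomogeneous k ∧ g0 - LL K * f ∈ II K P Q R) ∧
      ∀ g : MvPolynomial (Fin 3) K, g.IsHomogeneous (k+1) → ∃ (c : K)
        (f : MvPolynomial (Fin 3) K), f.IsHomogeneous k ∧
          (g - c • g0) - LL K * f ∈ II K P Q R) ∧
    Sj (II K P Q R) (LL K) (k+1) := by
  have hom1 : ∀ {f : MvPolynomial (Fin 3) K}, f.IsHomogeneous k →
      (LL K * f).IsHomogeneous (k+1) := by
    intro f hf
    have := LL_hom.mul hf
    rwa [add_comm 1 k] at this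
  obtain ⟨H0, hH0, hs0⟩ := II_dec (hom1 hf0) hLf0
  have hσ := dec_syz hH0 hs0
  have hNI : ∀ i j, i ≠ j → phi K (H0 i) + phi K (H0 j) ≠ 0 := fun i j hij h =>
    hf0I (inj_of_pair hH0 hs0 hij h)
  unfold Sj at hns
  push Not at hns
  obtain ⟨g0, hg0, hg0n⟩ := hns
  have hJ0 : phi K g0 ∉ Jm K P Q R Set.univ (k+1) := by
    intro h
    obtain ⟨f, hf, hf'⟩ := surj_of_Jm hg0 h
    exact hg0n f hf hf'
  obtain ⟨c1, c2, c3, c4⟩ := core hP1 hP2 hQ0 hQ2 hR0 hR1 hbig ⟨_, phi_dLT hg0, hJ0⟩ hσ hNI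
  refine ⟨by omega, ?_, ⟨g0, hg0, ?_, ?_⟩, ?_⟩
  · intro f hf hLf
    obtain ⟨H, hH, hs⟩ := II_dec (hom1 hf) hLf
    obtain ⟨c, hc⟩ := c2 _ (dec_syz hH hs)
    refine ⟨c, ?_⟩
    have hz : ∀ i, phi K (H i - c • H0 i) = 0 := by
      intro i
      have := congrFun hc i
      simp only [Pi.smul_apply] at this
      rw [map_sub, map_smul, this, sub_self]
    refine inj_of_pair (k := k+1) (H := fun i => H i - c • H0 i) ?_ ?_ (i := 0) (j := 1) (by decide)
      (by rw [hz, hz, add_zero])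
    · intro i
      refine ⟨?_, ?_⟩
      · beta_reduce; rw [smul_eq_C_mul]; exact (hH i).1.sub ((hH0 i).1.C_mul c)
      · beta_reduce; rw [smul_eq_C_mul]; exact dvd_sub (hH i).2 (dvd_mul_of_dvd_right (hH0 i).2 _)
    · rw [Finset.sum_sub_distrib, ← Finset.smul_sum, hs, hs0, mul_sub, mul_smul_comm]
  · rintro ⟨f, hf, hf'⟩; exact hg0n f hf hf'
  · have hJD : Jm K P Q R Set.univ (k+1) ≤ Polynomial.degreeLT K (k+1+1) := Jm_le _ _
    have hle : Jm K P Q R Set.univ (k+1) ⊔ Submodule.span K {phi K g0} ≤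
        Polynomial.degreeLT K (k+1+1) :=
      sup_le hJD (by rw [Submodule.span_singleton_le_iff_mem]; exact phi_dLT hg0)
    haveI : FiniteDimensional K (Polynomial.degreeLT K (k+1+1)) :=
      (Polynomial.degreeLTEquiv K _).symm.finiteDimensional
    haveI : FiniteDimensional K ↥(Jm K P Q R Set.univ (k+1) ⊔ Submodule.span K {phi K g0}) :=
      Submodule.finiteDimensional_of_le hle
    have hlt : Jm K P Q R Set.univ (k+1) < Jm K P Q R Set.univ (k+1) ⊔ Submodule.span K {phi K g0} := by
      refine lt_of_le_of_ne le_sup_left ?_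
      intro he
      apply hJ0
      rw [he]
      exact Submodule.mem_sup_right (Submodule.mem_span_singleton_self _)
    have hf1 := Submodule.finrank_lt_finrank_of_lt hlt
    have hf2 : Module.finrank K (Polynomial.degreeLT K (k+1+1)) = k+1+1 := by
      rw [(Polynomial.degreeLTEquiv K _).finrank_eq, Module.finrank_fin_fun]
    have heq := Submodule.eq_of_le_of_finrank_le hle (by omega)
    intro g hg
    have hgm := phi_dLT hg
    rw [← heq, Submodule.mem_sup] at hgm
    obtain ⟨p, hp, q, hq, hpq⟩ := hgm
    obtain ⟨c, rfl⟩ := Submodule.mem_span_singleton.mp hq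
    obtain ⟨f, hf, hf'⟩ := surj_of_Jm (P := P) (Q := Q) (R := R) (k := k) (g := g - c • g0)
      (by rw [smul_eq_C_mul]; exact hg.sub (hg0.C_mul c))
      (by rw [map_sub, map_smul, ← hpq, add_sub_cancel_right]; exact hp)
    exact ⟨c, f, hf, hf'⟩
  · intro g hg
    exact surj_of_Jm hg (c4 _ (phi_dLT hg))

theorem Sj_succ {I : Ideal (MvPolynomial (Fin 3) K)} {y : MvPolynomial (Fin 3) K} {k : ℕ}
    (h : Sj I y k) : Sj I y (k+1) := by
  intro g hg
  have key : homogeneousSubmodule (Fin 3) K (k+1) * homogeneousSubmodule (Fin 3) K 1 =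
      homogeneousSubmodule (Fin 3) K (k+1+1) := by
    rw [← homogeneousSubmodule_one_pow (σ := Fin 3) K (k+1), ← homogeneousSubmodule_one_pow (σ := Fin 3) K (k+1+1),
      pow_succ _ (k+1)]
  have hg' : g ∈ homogeneousSubmodule (Fin 3) K (k+1) * homogeneousSubmodule (Fin 3) K 1 := by
    rw [key]; exact hg
  induction hg' using Submodule.mul_induction_on' with
  | mem_mul_mem m hm l hl =>
    obtain ⟨f, hf, hf'⟩ := h m hm
    refine ⟨f * l, hf.mul hl, ?_⟩
    rw [show m * l - y * (f * l) = (m - y * f) * l by ring]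
    exact Ideal.mul_mem_right _ _ hf'
  | add x hx z hz ihx ihz =>
    have hmem : ∀ w ∈ homogeneousSubmodule (Fin 3) K (k+1) * homogeneousSubmodule (Fin 3) K 1,
        w.IsHomogeneous (k+1+1) := by
      intro w hw
      rw [key] at hw; exact hw
    obtain ⟨f, hf, hf'⟩ := ihx (hmem x hx)
    obtain ⟨e, he, he'⟩ := ihz (hmem z hz)
    refine ⟨f + e, hf.add he, ?_⟩
    rw [show x + z - y * (f + e) = (x - y * f) + (z - y * e) by ring]
    exact Ideal.add_mem _ hf' he'

theorem Sj_le {I : Ideal (MvPolynomial (Fin 3) K)} {y : MvPolynomial (Fin 3) K} {k n : ℕ}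
    (hkn : k ≤ n) (h : Sj I y k) : Sj I y n := by
  induction hkn with
  | refl => exact h
  | step _ ih => exact Sj_succ ih

end Ide


section Lin
variable {K : Type*} [Field K]

/-- graded piece of the quotient -/
noncomputable def gr (I : Ideal (MvPolynomial (Fin 3) K)) (k : ℕ) :
    Submodule K (MvPolynomial (Fin 3) K ⧸ I) :=
  Submodule.map (Ideal.Quotient.mkₐ K I).toLinearMap (homogeneousSubmodule (Fin 3) K k)

theorem hdim_eq (I : Ideal (MvPolynomial (Fin 3) K)) (k : ℕ) :
    hdim K 3 I k = Module.finrank K (gr I k) := rfl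

instance gr_fin (I : Ideal (MvPolynomial (Fin 3) K)) (k : ℕ) : Module.Finite K (gr I k) :=
  Module.Finite.iff_fg.mpr ((homogeneousSubmodule_fg (Fin 3) K k).map _)

noncomputable def gmk (I : Ideal (MvPolynomial (Fin 3) K)) {k : ℕ} (f : MvPolynomial (Fin 3) K)
    (hf : f.IsHomogeneous k) : gr I k :=
  ⟨Ideal.Quotient.mkₐ K I f, ⟨f, hf, rfl⟩⟩

theorem gmk_ex {I : Ideal (MvPolynomial (Fin 3) K)} {k : ℕ} (x : gr I k) :
    ∃ f, ∃ hf : f.IsHomogeneous k, x = gmk I f hf := by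
  obtain ⟨x, f, hf, rfl⟩ := x
  exact ⟨f, hf, rfl⟩

theorem gmk_zero {I : Ideal (MvPolynomial (Fin 3) K)} {k : ℕ} {f : MvPolynomial (Fin 3) K}
    {hf : f.IsHomogeneous k} : gmk I f hf = 0 ↔ f ∈ I := by
  rw [← Ideal.Quotient.eq_zero_iff_mem, Subtype.ext_iff]
  rfl

noncomputable def gmul (I : Ideal (MvPolynomial (Fin 3) K)) {y : MvPolynomial (Fin 3) K}
    (hy : y.IsHomogeneous 1) (k : ℕ) : gr I k →ₗ[K] gr I (k+1) :=
  (LinearMap.mulLeft K (Ideal.Quotient.mkₐ K I y)).restrict (by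
    rintro _ ⟨f, hf, rfl⟩
    refine ⟨y * f, ?_, ?_⟩
    · have := hy.mul hf
      rw [add_comm 1 k] at this
      exact this
    · simp)

theorem gmul_val {I : Ideal (MvPolynomial (Fin 3) K)} {y : MvPolynomial (Fin 3) K}
    (hy : y.IsHomogeneous 1) {k : ℕ} (x : gr I k) :
    (gmul I hy k x : MvPolynomial (Fin 3) K ⧸ I) = Ideal.Quotient.mkₐ K I y * x := rfl

theorem gmul_mk_eq {I : Ideal (MvPolynomial (Fin 3) K)} {y : MvPolynomial (Fin 3) K}
    (hy : y.IsHomogeneous 1) {k : ℕ} {f g : MvPolynomial (Fin 3) K} (hf : f.IsHomogeneous k)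
    (hg : g.IsHomogeneous (k+1)) : gmul I hy k (gmk I f hf) = gmk I g hg ↔ g - y * f ∈ I := by
  rw [Subtype.ext_iff, gmul_val, eq_comm, ← Ideal.Quotient.eq_zero_iff_mem, map_sub, sub_eq_zero,
    map_mul]
  rfl

theorem gmul_mk_zero {I : Ideal (MvPolynomial (Fin 3) K)} {y : MvPolynomial (Fin 3) K}
    (hy : y.IsHomogeneous 1) {k : ℕ} {f : MvPolynomial (Fin 3) K} (hf : f.IsHomogeneous k) :
    gmul I hy k (gmk I f hf) = 0 ↔ y * f ∈ I := by
  rw [Subtype.ext_iff, gmul_val, ← Ideal.Quotient.eq_zero_iff_mem, map_mul]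
  rfl

theorem gmul_inj {I : Ideal (MvPolynomial (Fin 3) K)} {y : MvPolynomial (Fin 3) K}
    (hy : y.IsHomogeneous 1) {k : ℕ}
    (h : ∀ f : MvPolynomial (Fin 3) K, f.IsHomogeneous k → y * f ∈ I → f ∈ I) :
    Function.Injective (gmul I hy k) := by
  rw [injective_iff_map_eq_zero]
  intro x hx
  obtain ⟨f, hf, rfl⟩ := gmk_ex x
  exact gmk_zero.mpr (h f hf ((gmul_mk_zero hy hf).mp hx))

theorem hdim_le_of_inj {I : Ideal (MvPolynomial (Fin 3) K)} {y : MvPolynomial (Fin 3) K}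
    (hy : y.IsHomogeneous 1) {k : ℕ}
    (h : ∀ f : MvPolynomial (Fin 3) K, f.IsHomogeneous k → y * f ∈ I → f ∈ I) :
    hdim K 3 I k ≤ hdim K 3 I (k+1) := by
  rw [hdim_eq, hdim_eq]
  exact LinearMap.finrank_le_finrank_of_injective (gmul_inj hy h)

theorem hdim_le_of_Sj {I : Ideal (MvPolynomial (Fin 3) K)} {y : MvPolynomial (Fin 3) K}
    (hy : y.IsHomogeneous 1) {k : ℕ} (h : Sj I y k) :
    hdim K 3 I (k+1) ≤ hdim K 3 I k := by
  rw [hdim_eq, hdim_eq]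
  have hs : LinearMap.range (gmul I hy k) = ⊤ := by
    rw [LinearMap.range_eq_top]
    intro x
    obtain ⟨g, hg, rfl⟩ := gmk_ex x
    obtain ⟨f, hf, hf'⟩ := h g hg
    exact ⟨gmk I f hf, (gmul_mk_eq hy hf hg).mpr hf'⟩
  have := LinearMap.finrank_range_le (gmul I hy k)
  rwa [hs, finrank_top] at this

theorem hdim_eq_of {I : Ideal (MvPolynomial (Fin 3) K)} {y : MvPolynomial (Fin 3) K}
    (hy : y.IsHomogeneous 1) {k : ℕ} {f0 g0 : MvPolynomial (Fin 3) K}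
    (hf0 : f0.IsHomogeneous k) (hf0I : f0 ∉ I) (hLf0 : y * f0 ∈ I)
    (hker : ∀ f : MvPolynomial (Fin 3) K, f.IsHomogeneous k → y * f ∈ I →
      ∃ c : K, f - c • f0 ∈ I)
    (hg0 : g0.IsHomogeneous (k+1))
    (hg0n : ¬ ∃ f : MvPolynomial (Fin 3) K, f.IsHomogeneous k ∧ g0 - y * f ∈ I)
    (hcok : ∀ g : MvPolynomial (Fin 3) K, g.IsHomogeneous (k+1) → ∃ (c : K)
        (f : MvPolynomial (Fin 3) K), f.IsHomogeneous k ∧ (g - c • g0) - y * f ∈ I) :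
    hdim K 3 I (k+1) = hdim K 3 I k := by
  rw [hdim_eq, hdim_eq]
  have e1 := LinearMap.finrank_range_add_finrank_ker (gmul I hy k)
  have e2 := Submodule.finrank_quotient_add_finrank (LinearMap.range (gmul I hy k))
  have e3 : Module.finrank K (LinearMap.ker (gmul I hy k)) = 1 := by
    have hm : gmk I f0 hf0 ∈ LinearMap.ker (gmul I hy k) := (gmul_mk_zero hy hf0).mpr hLf0
    rw [finrank_eq_one_iff_of_nonzero' (⟨_, hm⟩ : LinearMap.ker (gmul I hy k))]
    · rintro ⟨x, hx⟩
      obtain ⟨f, hf, rfl⟩ := gmk_ex x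
      obtain ⟨c, hc⟩ := hker f hf ((gmul_mk_zero hy hf).mp hx)
      refine ⟨c, ?_⟩
      apply Subtype.ext
      apply Subtype.ext
      rw [← Ideal.Quotient.eq_zero_iff_mem] at hc
      have : Ideal.Quotient.mkₐ K I f - c • Ideal.Quotient.mkₐ K I f0 = 0 := by
        rw [← map_smul, ← map_sub]; exact hc
      exact (sub_eq_zero.mp this).symm
    · intro h
      exact hf0I ((gmk_zero (hf := hf0)).mp (congrArg Subtype.val h))
  have e4 : Module.finrank K (gr I (k+1) ⧸ LinearMap.range (gmul I hy k)) = 1 := by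
    rw [finrank_eq_one_iff_of_nonzero' (Submodule.Quotient.mk (gmk I g0 hg0))]
    · intro w
      obtain ⟨x, rfl⟩ := Submodule.Quotient.mk_surjective _ w
      obtain ⟨g, hg, rfl⟩ := gmk_ex x
      obtain ⟨c, f, hf, hc⟩ := hcok g hg
      refine ⟨c, ?_⟩
      rw [← Submodule.Quotient.mk_smul, eq_comm, Submodule.Quotient.eq]
      refine ⟨gmk I f hf, ?_⟩
      have hh : (g - c • g0).IsHomogeneous (k+1) := by
        rw [smul_eq_C_mul]; exact hg.sub (hg0.C_mul c)
      rw [(gmul_mk_eq hy hf hh).mpr hc]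
      apply Subtype.ext
      change Ideal.Quotient.mkₐ K I (g - c • g0) = Ideal.Quotient.mkₐ K I g - c • Ideal.Quotient.mkₐ K I g0
      rw [map_sub, map_smul]
    · intro h
      rw [Submodule.Quotient.mk_eq_zero] at h
      obtain ⟨x, hx⟩ := h
      obtain ⟨f, hf, rfl⟩ := gmk_ex x
      exact hg0n ⟨f, hf, (gmul_mk_eq hy hf hg0).mp hx⟩
  omega

/-- coordinate scaling -/
noncomputable def th (v : Fin 3 → K) : MvPolynomial (Fin 3) K →ₐ[K] MvPolynomial (Fin 3) K :=
  aeval (fun i => C (v i) * X i)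

theorem th_X (v : Fin 3 → K) (i : Fin 3) : th v (X i) = C (v i) * X i := by simp [th]

theorem th_hom (v : Fin 3 → K) {k : ℕ} {f : MvPolynomial (Fin 3) K} (hf : f.IsHomogeneous k) :
    (th v f).IsHomogeneous k := by
  have := hf.aeval (fun i => C (v i) * X i : Fin 3 → MvPolynomial (Fin 3) K) (n := 1)
    (fun i => isHomogeneous_C_mul_X _ _)
  simpa [th] using this

theorem th_II (v : Fin 3 → K) {P Q R : Fin 4 → ℕ} {f : MvPolynomial (Fin 3) K}
    (hf : f ∈ II K P Q R) : th v f ∈ II K P Q R := by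
  have : II K P Q R ≤ Ideal.comap (th v) (II K P Q R) := by
    unfold II
    rw [Ideal.span_le]
    rintro _ ⟨i, rfl⟩
    change th v (Mo K (P i) (Q i) (R i)) ∈ II K P Q R
    apply II_of_dvd (i := i)
    rw [Mo, map_mul, map_mul, map_pow, map_pow, map_pow, th_X, th_X, th_X]
    exact ⟨C (v 0) ^ (P i) * C (v 1) ^ (Q i) * C (v 2) ^ (R i), by ring⟩
  exact this hf

theorem th_inv {v w : Fin 3 → K} (h : ∀ i, v i * w i = 1) (f : MvPolynomial (Fin 3) K) :
    th w (th v f) = f := by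
  have : (th w).comp (th v) = AlgHom.id K _ := by
    apply MvPolynomial.algHom_ext
    intro i
    rw [AlgHom.comp_apply, th_X, map_mul, th_X]
    have : th w (C (v i)) = C (v i) := by simp [th]
    rw [this, ← mul_assoc, ← C_mul, h, C_1, one_mul]; rfl
  exact congrArg (fun g => g f) this

theorem lin_form {y : MvPolynomial (Fin 3) K} (hy : y.IsHomogeneous 1) :
    ∃ v : Fin 3 → K, y = ∑ i, C (v i) * X i := by
  have : y ∈ homogeneousSubmodule (Fin 3) K 1 := hy
  rw [homogeneousSubmodule_one_eq_span_X, Submodule.mem_span_range_iff_exists_fun] at this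
  obtain ⟨c, hc⟩ := this
  refine ⟨c, ?_⟩
  rw [← hc]
  simp_rw [smul_eq_C_mul]

theorem any_gen {P Q R : Fin 4 → ℕ} {k : ℕ} {f0 : MvPolynomial (Fin 3) K}
    (hf0 : f0.IsHomogeneous k) (hf0I : f0 ∉ II K P Q R) (hLf0 : LL K * f0 ∈ II K P Q R)
    (v : Fin 3 → K) (hv : ∀ i, v i ≠ 0) :
    ∃ f : MvPolynomial (Fin 3) K, f.IsHomogeneous k ∧ f ∉ II K P Q R ∧
      (∑ i, C (v i) * X i) * f ∈ II K P Q R := by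
  refine ⟨th v f0, th_hom v hf0, ?_, ?_⟩
  · intro h
    have := th_II (fun i => (v i)⁻¹) h
    rw [th_inv (fun i => mul_inv_cancel₀ (hv i))] at this
    exact hf0I this
  · have := th_II v hLf0
    rw [map_mul, LL, map_add, map_add, th_X, th_X, th_X] at this
    rwa [Fin.sum_univ_three]

theorem any_form [CharZero K] {P Q R : Fin 4 → ℕ} {k : ℕ} {f0 : MvPolynomial (Fin 3) K}
    (hf0 : f0.IsHomogeneous k) (hf0I : f0 ∉ II K P Q R) (hLf0 : LL K * f0 ∈ II K P Q R)
    (hdim : hdim K 3 (II K P Q R) (k+1) = hdim K 3 (II K P Q R) k)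
    {y : MvPolynomial (Fin 3) K} (hy : y.IsHomogeneous 1) :
    ∃ f : MvPolynomial (Fin 3) K, f.IsHomogeneous k ∧ f ∉ II K P Q R ∧ y * f ∈ II K P Q R := by
  by_contra! hno
  have hinj := gmul_inj (I := II K P Q R) hy (k := k) (fun f hf h => by
    by_contra hfI
    exact hno f hf hfI h)
  rw [hdim_eq, hdim_eq] at hdim
  have hsurj := (LinearMap.injective_iff_surjective_of_finrank_eq_finrank hdim.symm).mp hinj
  set e := LinearEquiv.ofBijective (gmul (II K P Q R) hy k) ⟨hinj, hsurj⟩ with he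
  set T : Module.End K (gr (II K P Q R) k) :=
    e.symm.toLinearMap.comp (gmul (II K P Q R) LL_hom k) with hT
  obtain ⟨v, hv⟩ := lin_form hy
  have hfin := Module.End.finite_hasEigenvalue T
  have hbad : (insert 0 ({μ | T.HasEigenvalue μ} ∪ Set.range (fun i => (v i)⁻¹)) : Set K).Finite :=
    (hfin.union (Set.finite_range _)).insert 0
  obtain ⟨μ, hμ⟩ := hbad.infinite_compl.nonempty
  simp only [Set.mem_compl_iff, Set.mem_insert_iff, Set.mem_union, Set.mem_setOf_eq,
    Set.mem_range, not_or, not_exists] at hμ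
  obtain ⟨μ0, μ1, μ2⟩ := hμ
  obtain ⟨f, hf, hfI, hfm⟩ := any_gen hf0 hf0I hLf0 (fun i => 1 - μ * v i) (by
    intro i h
    have h1 : μ * v i = 1 := by linear_combination -h
    exact μ2 i (eq_comm.mp (eq_inv_of_mul_eq_one_left h1)))
  apply μ1
  apply Module.End.hasEigenvalue_of_hasEigenvector (x := gmk _ f hf)
  rw [Module.End.hasEigenvector_iff, Module.End.mem_eigenspace_iff]
  refine ⟨?_, fun h => hfI (gmk_zero.mp h)⟩
  rw [hT, LinearMap.comp_apply, LinearEquiv.coe_coe, LinearEquiv.symm_apply_eq, map_smul]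
  have hsum : (∑ i, C (1 - μ * v i) * X i) = LL K - μ • y := by
    rw [hv, Fin.sum_univ_three, Fin.sum_univ_three, LL, smul_eq_C_mul]
    simp only [C_sub, C_mul, C_1]; ring
  rw [hsum, ← Ideal.Quotient.eq_zero_iff_mem] at hfm
  apply Subtype.ext
  have h2 : Ideal.Quotient.mkₐ K (II K P Q R) ((LL K - μ • y) * f) = 0 := hfm
  rw [map_mul, map_sub, map_smul, sub_mul, sub_eq_zero, smul_mul_assoc] at h2
  exact h2

theorem final_II [CharZero K] {P Q R : Fin 4 → ℕ}
    (hP1 : P 1 = 0) (hP2 : P 2 = 0) (hQ0 : Q 0 = 0) (hQ2 : Q 2 = 0)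
    (hR0 : R 0 = 0) (hR1 : R 1 = 0)
    (hbig : ∀ m, ∃ N0, ∀ N, N0 ≤ N → ∀ p ∈ Polynomial.degreeLT K (N+1),
      p ∈ Jm K P Q R {x | x ≠ m} N) (hW : ¬ WLP (II K P Q R)) :
    ∃ s, P 0 + Q 1 + R 2 + (P 3 + Q 3 + R 3) = 3 * s + 6 ∧
      hdim K 3 (II K P Q R) s = sSup (Set.range (hdim K 3 (II K P Q R))) ∧
      hdim K 3 (II K P Q R) (s + 1) = hdim K 3 (II K P Q R) s ∧
      ∀ y : MvPolynomial (Fin 3) K, y.IsHomogeneous 1 →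
        ∃ f : MvPolynomial (Fin 3) K, f.IsHomogeneous s ∧ f ∉ II K P Q R ∧ y * f ∈ II K P Q R := by
  have hs : ∃ s, (∃ f : MvPolynomial (Fin 3) K, f.IsHomogeneous s ∧ LL K * f ∈ II K P Q R ∧
      f ∉ II K P Q R) ∧ ¬ Sj (II K P Q R) (LL K) s := by
    by_contra! hcon
    apply hW
    refine ⟨LL K, LL_hom, fun k => ?_⟩
    by_cases hk : ∀ f : MvPolynomial (Fin 3) K, f.IsHomogeneous k → LL K * f ∈ II K P Q R →
        f ∈ II K P Q R
    · exact Or.inl hk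
    · push Not at hk
      exact Or.inr (hcon k hk)
  obtain ⟨s, ⟨f0, hf0, hLf0, hf0I⟩, hns⟩ := hs
  obtain ⟨c1, c2, ⟨g0, hg0, hg0n, hg⟩, c4⟩ :=
    stepL hP1 hP2 hQ0 hQ2 hR0 hR1 hbig hf0 hf0I hLf0 hns
  have hd := hdim_eq_of LL_hom hf0 hf0I hLf0 c2 hg0 hg0n hg
  refine ⟨s, c1, ?_, hd, fun y hy => any_form hf0 hf0I hLf0 hd hy⟩
  have hup : ∀ n, hdim K 3 (II K P Q R) (s + 1 + n) ≤ hdim K 3 (II K P Q R) s := by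
    intro n
    induction n with
    | zero => exact hd.le
    | succ n ih => exact (hdim_le_of_Sj LL_hom (Sj_le (Nat.le_add_right (s+1) n) c4)).trans ih
  have hdn : ∀ n, ∀ k, k + n = s → hdim K 3 (II K P Q R) k ≤ hdim K 3 (II K P Q R) s := by
    intro n
    induction n with
    | zero => rintro k rfl; exact le_rfl
    | succ n ih =>
      intro k hk
      refine le_trans (hdim_le_of_inj LL_hom ?_) (ih (k+1) (by omega))
      intro f hf hLf
      by_contra hfI
      have := (stepL hP1 hP2 hQ0 hQ2 hR0 hR1 hbig hf hfI hLf
        (fun h => hns (Sj_le (by omega) h))).1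
      omega
  symm
  apply IsGreatest.csSup_eq
  refine ⟨⟨s, rfl⟩, ?_⟩
  rintro _ ⟨k, rfl⟩
  rcases Nat.lt_or_ge s k with h | h
  · obtain ⟨n, rfl⟩ := Nat.exists_eq_add_of_le (show s + 1 ≤ k from h)
    exact hup n
  · exact hdn (s - k) k (by omega)

end Lin

theorem stmt19 {K : Type*} [Field K] [CharZero K] (a b c α β γ : ℕ)
    (hα : α < a) (hβ : β < b) (hγ : γ < c)
    (htwo : (α ≠ 0 ∧ β ≠ 0) ∨ (α ≠ 0 ∧ γ ≠ 0) ∨ (β ≠ 0 ∧ γ ≠ 0))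
    (I : Ideal (MvPolynomial (Fin 3) K))
    (hI : I = Ideal.span {X 0 ^ a, X 1 ^ b, X 2 ^ c, X 0 ^ α * X 1 ^ β * X 2 ^ γ})
    (hWLP : ¬ WLP I) :
    3 ∣ (a + b + c + α + β + γ)
    ∧ (∀ s : ℕ, s = (a + b + c + α + β + γ) / 3 - 2 →
        hdim K 3 I s = sSup (Set.range (hdim K 3 I))
        ∧ hdim K 3 I (s + 1) = hdim K 3 I s
        ∧ ∀ y : MvPolynomial (Fin 3) K, y.IsHomogeneous 1 →
            ∃ f : MvPolynomial (Fin 3) K, f.IsHomogeneous s ∧ f ∉ I ∧ y * f ∈ I) := by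
  have hII : I = II K ![a,0,0,α] ![0,b,0,β] ![0,0,c,γ] := by
    rw [hI, II]
    congr 1
    ext f
    simp only [Set.mem_insert_iff, Set.mem_singleton_iff, Set.mem_range, Fin.exists_fin_succ]
    simp [Mo, eq_comm]
  rw [hII] at hWLP ⊢
  obtain ⟨s, h1, h2⟩ := final_II rfl rfl rfl rfl rfl rfl (hbig_spec a b c α β γ) hWLP
  have h1' : a + b + c + (α + β + γ) = 3 * s + 6 := h1
  refine ⟨⟨s + 2, by omega⟩, ?_⟩
  intro s' hs'
  have : s' = s := by omega
  subst this
  exact h2
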